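/- arXiv:math/0310473 — 3 statements merged into one kernel-verified Lean document; each statement's English description precedes it below -/
import Mathlib

section
/- Let K be a finite n-dimensional simplicial complex embedded in Euclidean space, with n ≥ 2, and suppose that each (n−1)-simplex of K is a face of precisely two n-simplices of K. Then for every p-simplex τ^p of K with 0 ≤ p ≤ n−2, the stratification rank satisfies r(τ^p) = 1. -/
open Filter MeasureTheory Geometry
open scoped BigOperators

noncomputable section

attribute [local instance 0] Classical.propDecidable

namespace AngleDefectPaper

/-- `N`-dimensional Euclidean space. -/
abbrev Euc (N : ℕ) : Type := EuclideanSpace ℝ (Fin N)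

variable {N : ℕ}

/-- The open simplex determined by a finite set of points: the intrinsic
(relative) interior of its convex hull. -/
def openSimplex (s : Finset (Euc N)) : Set (Euc N) :=
  intrinsicInterior ℝ (convexHull ℝ (s : Set (Euc N)))

/-- The normalized solid angle `α(η, σ)` of the simplex `σ` along its face `η`:
the fraction of a small sphere (in the affine span of `σ`) centered at a point of
the open face `η` that lies in `σ`, normalized so that the full sphere has
measure `1`.  It is computed as the limiting fraction of a small ambient ball
centered at the centroid of `η` that lies in the cylinder obtained by thickening
`σ` in the directions orthogonal to its affine span. -/
def solidAngle (η σ : Finset (Euc N)) : ℝ :=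
  limUnder (nhdsWithin (0 : ℝ) (Set.Ioi 0)) fun ε =>
    (volume (Metric.ball (η.centroid ℝ id) ε ∩
      {y : Euc N | ∃ c ∈ convexHull ℝ (σ : Set (Euc N)),
        ∃ w ∈ (vectorSpan ℝ (σ : Set (Euc N)))ᗮ, y = c + w})).toReal /
    (volume (Metric.ball (η.centroid ℝ id) ε)).toReal

/-- `Tcone r` is (a realization in the plane of) the open cone on `r` points:
`r` half-open segments emanating from the origin in pairwise distinct
directions, glued at the origin.  For `r = 0` it is a single point. -/
def Tcone (r : ℕ) : Set (ℝ × ℝ) :=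
  {0} ∪ ⋃ k ∈ Finset.range r,
    {p : ℝ × ℝ | ∃ t : ℝ, 0 ≤ t ∧ t < 1 ∧ p = t • ((1 : ℝ), (k : ℝ))}

/-- `x` has a neighborhood in `S` homeomorphic to `T_r × ℝ^{n-1}`, with the
homeomorphism taking `x` into the apex set `{cone point} × ℝ^{n-1}`. -/
def HasConeNbhd (n r : ℕ) (S : Set (Euc N)) (x : Euc N) : Prop :=
  ∃ U : Set (Euc N), U ∈ nhdsWithin x S ∧ U ⊆ S ∧
    ∃ h : U ≃ₜ (Tcone r) × EuclideanSpace ℝ (Fin (n - 1)),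
      ∀ hx : x ∈ U, ((h ⟨x, hx⟩).1 : ℝ × ℝ) = 0

/-- The set of points of `|K|` having a neighborhood of cone type `r`. -/
def csetAux (n : ℕ) (K : SimplicialComplex ℝ (Euc N)) (r : ℕ) : Set (Euc N) :=
  {x | x ∈ K.space ∧ HasConeNbhd n r K.space x}

/-- The sets `C_r(K)`: for `r ≠ 2` the points with a cone-type-`r` neighborhood,
and `C_2(K)` is the complement in `|K|` of the union of the others. -/
def cset (n : ℕ) (K : SimplicialComplex ℝ (Euc N)) (r : ℕ) : Set (Euc N) :=
  if r = 2 then K.space \ ⋃ r' ∈ {r' : ℕ | r' ≠ 2}, csetAux n K r'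
  else csetAux n K r

/-- The stratification rank `r(η) = r/2`, where `C_r(K)` is the (unique) set of
the stratification containing the open simplex of `η`. -/
def strRank (n : ℕ) (K : SimplicialComplex ℝ (Euc N)) (η : Finset (Euc N)) : ℝ :=
  if h : ∃ r : ℕ, r ≠ 2 ∧ openSimplex η ⊆ csetAux n K r then (h.choose : ℝ) / 2
  else 1

/-- The set of `n`-simplices of `K` having `η` as a face. -/
def nSimplicesOn (n : ℕ) (K : SimplicialComplex ℝ (Euc N)) (η : Finset (Euc N)) :
    Set (Finset (Euc N)) :=
  {σ | σ ∈ K.faces ∧ σ.card = n + 1 ∧ η ⊆ σ}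

/-- The generalized angle defect `D(η) = r(η) - Σ_{σⁿ ≻ η} α(η, σⁿ)`. -/
def defect (n : ℕ) (K : SimplicialComplex ℝ (Euc N)) (η : Finset (Euc N)) : ℝ :=
  strRank n K η - ∑ᶠ σ ∈ nSimplicesOn n K η, solidAngle η σ

/-- The angle defect sequence `a_m = 4 B_{m+2} (2^{m+2} - 1)/(m+2)`, where `B_k`
is the `k`-th Bernoulli number (with the convention `B_1 = -1/2`). -/
def ads (m : ℕ) : ℚ :=
  4 * bernoulli (m + 2) * (2 ^ (m + 2) - 1) / (m + 2)

/-- The ascending stratified curvature of a simplex `τ` (of dimension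
`p = τ.card - 1`) in the `n`-dimensional complex `K`. -/
def asc (n : ℕ) (K : SimplicialComplex ℝ (Euc N)) (τ : Finset (Euc N)) : ℝ :=
  (ads (τ.card - 1) : ℝ) * defect n K τ +
    (ads (τ.card - 1) : ℝ) / 2 *
      ∑ i ∈ Finset.Icc τ.card n,
        (-1 : ℝ) ^ (i - (τ.card - 1)) *
          ∑ᶠ η ∈ {η : Finset (Euc N) | η ∈ K.faces ∧ η.card = i + 1 ∧ τ ⊆ η},
            defect n K η

/-- The stratified Euler characteristic `χˢ(K) = Σ_{η ∈ K} r(η) (-1)^{dim η}`. -/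
def stratEuler (n : ℕ) (K : SimplicialComplex ℝ (Euc N)) : ℝ :=
  ∑ᶠ η ∈ K.faces, strRank n K η * (-1 : ℝ) ^ (η.card - 1)

/-- `fcount F k` is the number of `k`-dimensional simplices in `F`. -/
def fcount (F : Set (Finset (Euc N))) (k : ℕ) : ℕ :=
  {s ∈ F | s.card = k + 1}.ncard

/-- The combinatorial Euler characteristic `χ(F) = Σ_k (-1)^k f_k(F)`. -/
def eulerChar (F : Set (Finset (Euc N))) : ℤ :=
  ∑ᶠ k : ℕ, (-1 : ℤ) ^ k * fcount F k

/-- The link of `η` in `K`: all simplices `ω` of `K` disjoint from `η` such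
that the join `η ∗ ω` is a simplex of `K`. -/
def linkFaces (K : SimplicialComplex ℝ (Euc N)) (η : Finset (Euc N)) :
    Set (Finset (Euc N)) :=
  {ω | ω ∈ K.faces ∧ Disjoint η ω ∧ η ∪ ω ∈ K.faces}

/-- `K` is an `n`-dimensional simplicial complex. -/
def IsNDim (n : ℕ) (K : SimplicialComplex ℝ (Euc N)) : Prop :=
  (∀ s ∈ K.faces, s.card ≤ n + 1) ∧ ∃ s ∈ K.faces, s.card = n + 1

/-- `L` is a subdivision of `K`: same underlying space, and every open simplex
of `L` is contained in an open simplex of `K`. -/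
def IsSubdivision (K L : SimplicialComplex ℝ (Euc N)) : Prop :=
  L.space = K.space ∧ ∀ s ∈ L.faces, ∃ t ∈ K.faces, openSimplex s ⊆ openSimplex t

/-!
A neighbourhood in `|K|` homeomorphic to `T_r × ℝⁿ⁻¹` contains a copy of the apex set `{0} × ℝⁿ⁻¹`,
and no nonempty open part of that copy is covered by the countably many simplices of dimension at
most `n - 2` (Baire category and invariance of domain). Off these simplices, `|K|` is locally
Euclidean: a point is interior to an `n`-simplex, or interior to an `(n-1)`-simplex along which two
`n`-simplices are glued. Hence `T_r × ℝⁿ⁻¹` is locally Euclidean at some apex, and invariance of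
domain forces `r = 2`: for `r ≤ 1` the cone is at most a half-space seen from its boundary, and for
`r ≥ 3` two of its sheets form a copy of `ℝⁿ`, which would be open although a third sheet
accumulates on it. So `C_r(K)` is empty for every `r ≠ 2`.

Invariance of domain comes from Brouwer's theorem by Kulpa's argument: if `f 0` were not interior to
the image of the ball, an extension `G` of `f⁻¹` could be perturbed to have no zero on the image.
Brouwer's theorem in turn follows Milnor and Rogers: `t ↦ ∫ det (1 + t Dh)` is a polynomial, and is
the volume of the domain for small `t`, hence also for `t = 1`.
-/

open scoped Topology

section LinearAlgebra

variable {E : Type*} [NormedAddCommGroup E] [NormedSpace ℝ E]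

lemma continuous_det_one_add_smul (A : E →L[ℝ] E) :
    Continuous fun t : ℝ => (1 + t • A : E →L[ℝ] E).det :=
  ContinuousLinearMap.continuous_det.comp (by fun_prop)

variable [FiniteDimensional ℝ E]

lemma det_one_add_ne_zero_of_norm_lt_one {A : E →L[ℝ] E} (hA : ‖A‖ < 1) :
    (1 + A : E →L[ℝ] E).det ≠ 0 := by
  have : CompleteSpace E := FiniteDimensional.complete ℝ E
  have hunit : IsUnit (1 + A) := by
    simpa using isUnit_one_sub_of_norm_lt_one (x := -A) (by rwa [norm_neg])
  exact ((hunit.map (ContinuousLinearMap.toLinearMapRingHom : (E →L[ℝ] E) →+* (E →ₗ[ℝ] E))).map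
    LinearMap.det).ne_zero

lemma det_one_add_pos_of_norm_lt_one {A : E →L[ℝ] E} (hA : ‖A‖ < 1) :
    0 < (1 + A : E →L[ℝ] E).det := by
  by_contra! hneg
  obtain ⟨t, ht, hzero⟩ := intermediate_value_Icc' zero_le_one
    (continuous_det_one_add_smul A).continuousOn
    (show (0 : ℝ) ∈ _ by simpa [ContinuousLinearMap.det] using hneg)
  refine det_one_add_ne_zero_of_norm_lt_one ?_ hzero
  calc ‖t • A‖ = t * ‖A‖ := by rw [norm_smul, Real.norm_of_nonneg ht.1]
    _ ≤ ‖A‖ := mul_le_of_le_one_left (norm_nonneg A) ht.2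
    _ < 1 := hA

lemma exists_polynomial_det_one_add_smul (A : E →L[ℝ] E) :
    ∃ p : Polynomial ℝ, p.natDegree ≤ Module.finrank ℝ E ∧
      ∀ t : ℝ, (1 + t • A : E →L[ℝ] E).det = p.eval t := by
  let b := Module.finBasis ℝ E
  let M := LinearMap.toMatrix b b (A : E →ₗ[ℝ] E)
  refine ⟨_, (Polynomial.natDegree_det_X_add_C_le M 1).trans (by simp), fun t => ?_⟩
  have hmatrix : LinearMap.toMatrix b b ((1 + t • A : E →L[ℝ] E) : E →ₗ[ℝ] E) = 1 + t • M := by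
    simp [M, LinearMap.toMatrix_one]
  rw [ContinuousLinearMap.det, ← LinearMap.det_toMatrix b, hmatrix,
    ← Polynomial.coe_evalRingHom, RingHom.map_det]
  congr 1
  ext i j
  simp only [RingHom.mapMatrix_apply, Polynomial.coe_evalRingHom, Matrix.map_apply,
    Matrix.add_apply, Matrix.smul_apply, smul_eq_mul, Matrix.one_apply, apply_ite Polynomial.C,
    map_zero, map_one, apply_ite (Polynomial.eval t), Polynomial.eval_add, Polynomial.eval_mul,
    Polynomial.eval_C, Polynomial.eval_X, Polynomial.eval_one, Polynomial.eval_zero]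
  ring

lemma exists_extrapolation_det_one_add (E : Type*) [NormedAddCommGroup E] [NormedSpace ℝ E]
    [FiniteDimensional ℝ E] {δ : ℝ} (hδ : 0 < δ) :
    ∃ (T : Finset ℝ) (c : ℝ → ℝ), (∀ t ∈ T, 0 < t ∧ t < δ) ∧ ∑ t ∈ T, c t = 1 ∧
      ∀ A : E →L[ℝ] E, (1 + A : E →L[ℝ] E).det = ∑ t ∈ T, c t * (1 + t • A : E →L[ℝ] E).det := by
  obtain ⟨T, hTδ, hcard⟩ := (Set.Ioo_infinite hδ).exists_subset_card_eq (Module.finrank ℝ E + 1)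
  have hinj : Set.InjOn (id : ℝ → ℝ) T := Function.injective_id.injOn
  have hne : T.Nonempty := Finset.card_pos.1 (by omega)
  refine ⟨T, fun t => (Lagrange.basis T id t).eval 1, fun t ht => hTδ ht, ?_, fun A => ?_⟩
  · rw [← Polynomial.eval_finsetSum, Lagrange.sum_basis hinj hne, Polynomial.eval_one]
  · obtain ⟨p, hp, hdet⟩ := exists_polynomial_det_one_add_smul A
    have hdeg : p.degree < T.card := by
      rw [hcard]
      exact Polynomial.degree_le_natDegree.trans_lt (by exact_mod_cast Nat.lt_succ_of_le hp)
    calc (1 + A : E →L[ℝ] E).det = p.eval 1 := by rw [← hdet, one_smul]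
      _ = (Lagrange.interpolate T id fun t => p.eval (id t)).eval 1 := by
          rw [← Lagrange.eq_interpolate hinj hdeg]
      _ = ∑ t ∈ T, (Lagrange.basis T id t).eval 1 * (1 + t • A : E →L[ℝ] E).det := by
          simp only [Lagrange.interpolate_apply, Polynomial.eval_finsetSum, Polynomial.eval_mul,
            Polynomial.eval_C, hdet, id, mul_comm]

end LinearAlgebra

section ChangeOfVariables

variable {E F : Type*} [NormedAddCommGroup E] [NormedSpace ℝ E]

lemma exists_mem_frontier_of_mem_segment {s : Set E} {x y : E} (hx : x ∈ s) (hy : y ∉ s) :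
    ∃ z ∈ segment ℝ x y, z ∈ frontier s := by
  by_contra! hfront
  obtain ⟨z, -, hz, hz'⟩ := (convex_segment x y).isPreconnected (interior s) (closure s)ᶜ
    isOpen_interior isClosed_closure.isOpen_compl
    (fun z hz => or_iff_not_imp_right.2 fun hcl => by_contra fun hzint =>
      hfront z hz ⟨not_not.1 hcl, hzint⟩)
    ⟨x, left_mem_segment ℝ x y, by_contra fun hzint =>
      hfront x (left_mem_segment ℝ x y) ⟨subset_closure hx, hzint⟩⟩
    ⟨y, right_mem_segment ℝ x y, fun hcl =>
      hfront y (right_mem_segment ℝ x y) ⟨hcl, fun hzint => hy (interior_subset hzint)⟩⟩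
  exact hz' (subset_closure (interior_subset hz))

lemma lipschitzWith_indicator [SeminormedAddCommGroup F] {f : E → F} {s : Set E} {L : NNReal}
    (hf : LipschitzOnWith L f (closure s)) (hf0 : ∀ x ∈ frontier s, f x = 0) :
    LipschitzWith L (s.indicator f) := by
  have hcross : ∀ x ∈ s, ∀ y ∉ s, dist (f x) 0 ≤ L * dist x y := by
    intro x hx y hy
    obtain ⟨z, hz, hzs⟩ := exists_mem_frontier_of_mem_segment hx hy
    calc dist (f x) 0 = dist (f x) (f z) := by rw [hf0 z hzs]
      _ ≤ L * dist x z := hf.dist_le_mul x (subset_closure hx) z (frontier_subset_closure hzs)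
      _ ≤ L * dist x y := by
        rw [← dist_add_dist_of_mem_segment hz]
        gcongr
        exact le_add_of_nonneg_right dist_nonneg
  refine LipschitzWith.of_dist_le_mul fun x y => ?_
  by_cases hx : x ∈ s <;> by_cases hy : y ∈ s
  · simpa only [hx, hy, Set.indicator_of_mem] using
      hf.dist_le_mul x (subset_closure hx) y (subset_closure hy)
  · simpa only [hx, hy, Set.indicator_of_mem, not_false_eq_true, Set.indicator_of_notMem] using
      hcross x hx y hy
  · simpa only [hx, hy, Set.indicator_of_mem, not_false_eq_true, Set.indicator_of_notMem,
      dist_comm] using hcross y hy x hx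
  · simp only [hx, hy, not_false_eq_true, Set.indicator_of_notMem, dist_self]
    positivity

lemma bijective_id_add_of_lipschitzWith [CompleteSpace E] {h : E → E} {L : NNReal}
    (hL : LipschitzWith L h) (hL1 : L < 1) : Function.Bijective fun x => x + h x := by
  have happrox : ApproximatesLinearOn (fun x => x + h x)
      ((ContinuousLinearEquiv.refl ℝ E : E ≃L[ℝ] E) : E →L[ℝ] E) Set.univ L := by
    intro x _ y _
    simpa [add_sub_add_comm] using hL.norm_sub_le x y
  have hsmall : Subsingleton E ∨
      L < ‖((ContinuousLinearEquiv.refl ℝ E).symm : E →L[ℝ] E)‖₊⁻¹ := by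
    refine (subsingleton_or_nontrivial E).imp_right fun (_ : Nontrivial E) => ?_
    obtain ⟨x, hx⟩ := exists_ne (0 : E)
    have := NontrivialTopology.of_exists_norm_ne_zero ⟨x, norm_ne_zero_iff.2 hx⟩
    rwa [ContinuousLinearEquiv.refl_symm, ContinuousLinearEquiv.coe_refl,
      ContinuousLinearMap.nnnorm_id, inv_one]
  exact ⟨Set.injOn_univ.1 (happrox.injOn hsmall), happrox.surjective hsmall⟩

variable [FiniteDimensional ℝ E] [MeasurableSpace E] [BorelSpace E]
  (μ : Measure E) {s : Set E} {h : E → E} {L : NNReal}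

lemma integrableOn_det_one_add_smul_fderiv (hμ : μ s ≠ ⊤) (hL : LipschitzWith L h) (t : ℝ) :
    IntegrableOn (fun x => (1 + t • fderiv ℝ h x : E →L[ℝ] E).det) s μ := by
  have hcont : Continuous fun A : E →L[ℝ] E => (1 + t • A).det :=
    ContinuousLinearMap.continuous_det.comp (by fun_prop)
  obtain ⟨C, hC⟩ := (isCompact_closedBall (0 : E →L[ℝ] E) L).exists_bound_of_continuousOn
    hcont.continuousOn
  have : CompleteSpace E := FiniteDimensional.complete ℝ E
  refine Measure.integrableOn_of_bounded (M := C) hμ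
    (hcont.measurable.comp (measurable_fderiv ℝ h)).aestronglyMeasurable
    (Eventually.of_forall fun x => hC _ ?_)
  exact mem_closedBall_zero_iff.2 (norm_fderiv_le_of_lipschitz ℝ hL)

variable [μ.IsAddHaarMeasure]

lemma setIntegral_det_one_add_fderiv_of_lt_one (hs : IsOpen s) (hL : LipschitzWith L h)
    (hL1 : L < 1) (h0 : ∀ x ∉ s, h x = 0) (hd : DifferentiableOn ℝ h s) :
    ∫ x in s, (1 + fderiv ℝ h x : E →L[ℝ] E).det ∂μ = μ.real s := by
  have : CompleteSpace E := FiniteDimensional.complete ℝ E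
  have hbij := bijective_id_add_of_lipschitzWith hL hL1
  have himage : (fun x => x + h x) '' s = s := by
    have hcompl : Set.EqOn (fun x => x + h x) id sᶜ := fun x hx => by
      simp only [h0 x hx, add_zero, id]
    rw [← compl_inj_iff, ← Set.image_compl_eq hbij, hcompl.image_eq, Set.image_id]
  have hderiv : ∀ x ∈ s, HasFDerivWithinAt (fun x => x + h x) (1 + fderiv ℝ h x) s x :=
    fun x hx => ((hasFDerivAt_id x).add
      (hd.differentiableAt (hs.mem_nhds hx)).hasFDerivAt).hasFDerivWithinAt
  have hdet : ∀ x, 0 < (1 + fderiv ℝ h x : E →L[ℝ] E).det := fun x =>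
    det_one_add_pos_of_norm_lt_one ((norm_fderiv_le_of_lipschitz ℝ hL).trans_lt hL1)
  calc ∫ x in s, (1 + fderiv ℝ h x : E →L[ℝ] E).det ∂μ
      = ∫ x in s, |(1 + fderiv ℝ h x : E →L[ℝ] E).det| • (1 : ℝ) ∂μ := by
        simp only [abs_of_pos (hdet _), smul_eq_mul, mul_one]
    _ = ∫ _ in (fun x => x + h x) '' s, (1 : ℝ) ∂μ :=
        (integral_image_eq_integral_abs_det_fderiv_smul μ hs.measurableSet hderiv
          hbij.injective.injOn fun _ => (1 : ℝ)).symm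
    _ = μ.real s := by rw [himage, setIntegral_const, smul_eq_mul, mul_one]

lemma setIntegral_det_one_add_fderiv (hs : IsOpen s) (hμ : μ s ≠ ⊤) (hL : LipschitzWith L h)
    (h0 : ∀ x ∉ s, h x = 0) (hd : DifferentiableOn ℝ h s) :
    ∫ x in s, (1 + fderiv ℝ h x : E →L[ℝ] E).det ∂μ = μ.real s := by
  obtain ⟨T, c, hT, hc, hdet⟩ :=
    exists_extrapolation_det_one_add E (δ := (L + 1 : ℝ)⁻¹) (by positivity)
  have hsmall : ∀ t ∈ T, ∫ x in s, (1 + t • fderiv ℝ h x : E →L[ℝ] E).det ∂μ = μ.real s := by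
    intro t ht
    have ht1 : ‖t‖₊ * L < 1 := by
      rw [← NNReal.coe_lt_coe, NNReal.coe_mul, coe_nnnorm, Real.norm_of_nonneg (hT t ht).1.le,
        NNReal.coe_one]
      calc t * L ≤ t * (L + 1) := by have := (hT t ht).1; gcongr; simp
        _ < (L + 1 : ℝ)⁻¹ * (L + 1) := by gcongr; exact (hT t ht).2
        _ = 1 := inv_mul_cancel₀ (by positivity)
    have hfderiv : ∀ x ∈ s, fderiv ℝ (t • h) x = t • fderiv ℝ h x := fun x hx =>
      fderiv_const_smul (hd.differentiableAt (hs.mem_nhds hx)) t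
    rw [← setIntegral_det_one_add_fderiv_of_lt_one μ hs ((lipschitzWith_smul t).comp hL) ht1
      (fun x hx => by simp [h0 x hx]) (hd.const_smul t)]
    exact setIntegral_congr_fun hs.measurableSet fun x hx => by
      rw [← hfderiv x hx]; rfl
  calc ∫ x in s, (1 + fderiv ℝ h x : E →L[ℝ] E).det ∂μ
      = ∑ t ∈ T, c t * ∫ x in s, (1 + t • fderiv ℝ h x : E →L[ℝ] E).det ∂μ := by
        simp only [hdet (fderiv ℝ h _)]
        rw [integral_finsetSum _ fun t _ =>
          (integrableOn_det_one_add_smul_fderiv μ hμ hL t).const_mul _]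
        simp only [integral_const_mul]
    _ = ∑ t ∈ T, c t * μ.real s := Finset.sum_congr rfl fun t ht => by rw [hsmall t ht]
    _ = μ.real s := by rw [← Finset.sum_mul, hc, one_mul]

end ChangeOfVariables

section Brouwer

variable {E : Type*} [NormedAddCommGroup E] [InnerProductSpace ℝ E] [FiniteDimensional ℝ E]

lemma det_fderiv_eq_zero_of_norm_eq {f : E → E} {R : ℝ} (hR : R ≠ 0) (hf : ∀ y, ‖f y‖ = R)
    {x : E} (hd : DifferentiableAt ℝ f x) : (fderiv ℝ f x).det = 0 := by
  by_contra hdet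
  obtain ⟨w, hw⟩ := (LinearMap.equivOfDetNeZero (fderiv ℝ f x : E →ₗ[ℝ] E) hdet).surjective (f x)
  have hw' : fderiv ℝ f x w = f x := hw
  have hnorm : HasFDerivAt (fun y => ‖f y‖ ^ 2) (0 : E →L[ℝ] ℝ) x := by
    simpa only [hf] using hasFDerivAt_const (R ^ 2) x
  have hzero := DFunLike.congr_fun (hd.hasFDerivAt.norm_sq.unique hnorm) w
  simp [hw', hf, hR] at hzero

lemma exists_norm_eq_and_ne_of_contDiff {f : E → E} (hf : ContDiff ℝ 1 f) {R : ℝ} (hR : 0 < R)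
    (hnorm : ∀ x, ‖f x‖ = R) : ∃ x, ‖x‖ = R ∧ f x ≠ x := by
  by_contra! hfix
  borelize E
  set h : E → E := (Metric.ball 0 R).indicator fun x => f x - x
  obtain ⟨L, hL⟩ := (hf.sub contDiff_id).contDiffOn.exists_lipschitzOnWith one_ne_zero
    (convex_closedBall (0 : E) R) (isCompact_closedBall 0 R)
  have hLip : LipschitzWith L h := by
    refine lipschitzWith_indicator (by rwa [closure_ball 0 hR.ne']) fun x hx => ?_
    rw [frontier_ball 0 hR.ne', mem_sphere_zero_iff_norm] at hx
    rw [hfix x hx, sub_self]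
  have hderiv : ∀ x ∈ Metric.ball (0 : E) R, HasFDerivAt h (fderiv ℝ f x - 1) x := fun x hx =>
    (((hf.differentiable one_ne_zero x).hasFDerivAt.sub (hasFDerivAt_id x))).congr_of_eventuallyEq
      (Set.eqOn_indicator.eventuallyEq_of_mem (Metric.isOpen_ball.mem_nhds hx))
  have hvolume := setIntegral_det_one_add_fderiv volume Metric.isOpen_ball
    measure_ball_lt_top.ne hLip (fun x hx => Set.indicator_of_notMem hx _)
    fun x hx => (hderiv x hx).differentiableAt.differentiableWithinAt
  have hzero : ∀ x ∈ Metric.ball (0 : E) R, (1 + fderiv ℝ h x : E →L[ℝ] E).det = 0 :=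
    fun x hx => by
      rw [(hderiv x hx).fderiv, add_sub_cancel]
      exact det_fderiv_eq_zero_of_norm_eq hR.ne' hnorm (hf.differentiable one_ne_zero x)
  rw [setIntegral_congr_fun measurableSet_ball hzero, integral_zero] at hvolume
  exact (ENNReal.toReal_pos (Metric.measure_ball_pos volume 0 hR).ne'
    measure_ball_lt_top.ne).ne hvolume

lemma exists_fixedPoint_of_contDiff {v : E → E} (hv : ContDiff ℝ 1 v)
    (hc : HasCompactSupport v) : ∃ x, v x = x := by
  by_contra! hfix
  obtain ⟨R, hR, hsupp⟩ := hc.isCompact.isBounded.subset_ball_lt 0 0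
  have hv0 : ∀ x, ‖x‖ = R → v x = 0 := fun x hx => by
    by_contra hne
    exact (mem_ball_zero_iff.1 (hsupp (subset_tsupport v hne))).ne hx
  have hne : ∀ x, x - v x ≠ 0 := fun x => sub_ne_zero.2 (hfix x).symm
  have hsub : ContDiff ℝ 1 fun x => x - v x := contDiff_id.sub hv
  obtain ⟨x, hx, hxne⟩ := exists_norm_eq_and_ne_of_contDiff
    (f := fun x => (R * ‖x - v x‖⁻¹) • (x - v x))
    ((contDiff_const.mul ((hsub.norm ℝ hne).inv fun x => norm_ne_zero_iff.2 (hne x))).smul hsub)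
    hR fun x => by
      rw [norm_smul, norm_mul, norm_inv, norm_norm, mul_assoc,
        inv_mul_cancel₀ (norm_ne_zero_iff.2 (hne x)), mul_one, Real.norm_of_nonneg hR.le]
  exact hxne (by simp [hv0 x hx, hx, hR.ne'])

lemma exists_fixedPoint_of_hasCompactSupport {w : E → E} (hw : Continuous w)
    (hc : HasCompactSupport w) : ∃ x, w x = x := by
  by_contra! hfix
  obtain ⟨g, hg, hdist, hsupp⟩ := hw.exists_contDiff_approx 1 (ε := fun x => dist x (w x))
    (by fun_prop) fun x => dist_pos.2 (hfix x).symm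
  obtain ⟨x, hx⟩ := exists_fixedPoint_of_contDiff hg (hc.mono hsupp)
  exact (hdist x).ne (by rw [hx])

theorem brouwer_fixedPoint {f : E → E} (hf : ContinuousOn f (Metric.closedBall 0 1))
    (hmaps : Set.MapsTo f (Metric.closedBall 0 1) (Metric.closedBall 0 1)) :
    ∃ x ∈ Metric.closedBall (0 : E) 1, f x = x := by
  let proj : E → E := fun x => (max 1 ‖x‖)⁻¹ • x
  have hmax : ∀ x : E, 0 < max 1 ‖x‖ := fun x => lt_max_of_lt_left one_pos
  have hproj : Continuous proj :=
    (Continuous.inv₀ (by fun_prop) fun x => (hmax x).ne').smul continuous_id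
  have hproj_mem : ∀ x, proj x ∈ Metric.closedBall (0 : E) 1 := fun x => by
    rw [mem_closedBall_zero_iff, norm_smul, norm_inv, Real.norm_of_nonneg (hmax x).le,
      inv_mul_le_one₀ (hmax x)]
    exact le_max_right _ _
  let cutoff : E → ℝ := fun x => max 0 (min 1 (2 - ‖x‖))
  have hcutoff_nonneg : ∀ x, 0 ≤ cutoff x := fun x => le_max_left _ _
  have hcutoff_le : ∀ x, cutoff x ≤ 1 := fun x => max_le zero_le_one (min_le_left _ _)
  have hsupp : HasCompactSupport fun x => cutoff x • f (proj x) := by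
    refine HasCompactSupport.intro (isCompact_closedBall 0 2) fun x hx => ?_
    rw [mem_closedBall_zero_iff, not_le] at hx
    have hx0 : cutoff x = 0 := max_eq_left ((min_le_right _ _).trans (by linarith))
    rw [hx0, zero_smul]
  obtain ⟨x, hx⟩ : ∃ x, cutoff x • f (proj x) = x := exists_fixedPoint_of_hasCompactSupport
    (Continuous.smul (by fun_prop) (hf.comp_continuous hproj hproj_mem)) hsupp
  have hnorm : ‖x‖ ≤ 1 := by
    rw [← hx, norm_smul, Real.norm_of_nonneg (hcutoff_nonneg x)]
    exact mul_le_one₀ (hcutoff_le x) (norm_nonneg _)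
      (mem_closedBall_zero_iff.1 (hmaps (hproj_mem x)))
  have hproj_x : proj x = x := by simp [proj, hnorm]
  have hcutoff_x : cutoff x = 1 := by
    simp only [cutoff]
    rw [min_eq_left (by linarith), max_eq_right zero_le_one]
  exact ⟨x, mem_closedBall_zero_iff.2 hnorm, by simpa [hproj_x, hcutoff_x] using hx⟩

end Brouwer

section InvarianceOfDomain

universe u v

lemma exists_continuous_leftInvOn {X : Type u} {Y : Type v} [TopologicalSpace X]
    [TietzeExtension.{v} X] [TopologicalSpace Y] [NormalSpace Y] [T2Space Y] {f : X → Y} {K : Set X}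
    (hK : IsCompact K) (hf : ContinuousOn f K) (hinj : Set.InjOn f K) :
    ∃ g : Y → X, Continuous g ∧ Set.LeftInvOn g f K := by
  have : CompactSpace K := isCompact_iff_compactSpace.1 hK
  have hemb : Topology.IsClosedEmbedding (K.domRestrict f) :=
    (continuousOn_iff_continuous_domRestrict.1 hf).isClosedEmbedding
      (Set.injOn_iff_injective.1 hinj)
  obtain ⟨g, hg⟩ := ContinuousMap.exists_extension hemb
    (⟨Subtype.val, continuous_subtype_val⟩ : C(K, X))
  exact ⟨g, g.continuous, fun x hx => DFunLike.congr_fun hg ⟨x, hx⟩⟩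

/-- The map fixing every point at distance at least `r` from `c` and moving the others, except the
centre `c` (which is sent to itself), radially onto the sphere of radius `r`. -/
def pushAway {E : Type*} [NormedAddCommGroup E] [NormedSpace ℝ E] (c : E) (r : ℝ) (y : E) : E :=
  c + max (r / dist y c) 1 • (y - c)

section PushAway

variable {E : Type*} [NormedAddCommGroup E] [NormedSpace ℝ E] {c y : E} {r : ℝ}

lemma pushAway_of_le_dist (h : r ≤ dist y c) : pushAway c r y = y := by
  rw [pushAway, max_eq_right (div_le_one_of_le₀ h dist_nonneg), one_smul, add_sub_cancel]

lemma dist_pushAway_of_dist_le (hr : 0 ≤ r) (hy : y ≠ c) (h : dist y c ≤ r) :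
    dist (pushAway c r y) c = r := by
  have hpos : 0 < dist y c := dist_pos.2 hy
  rw [pushAway, max_eq_left ((one_le_div hpos).2 h), dist_eq_norm, add_sub_cancel_left, norm_smul,
    ← dist_eq_norm, Real.norm_of_nonneg (by positivity), div_mul_cancel₀ _ hpos.ne']

lemma continuousOn_pushAway : ContinuousOn (pushAway c r) {c}ᶜ :=
  continuousOn_const.add <| ((continuousOn_const.div (by fun_prop) fun _ hy =>
    (dist_pos.2 hy).ne').sup continuousOn_const).smul (by fun_prop)

end PushAway

variable {E : Type*} [NormedAddCommGroup E] [NormedSpace ℝ E] [FiniteDimensional ℝ E]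

lemma exists_approx_ne_zero_of_addHaar_eq_zero [MeasurableSpace E] [BorelSpace E] (μ : Measure E)
    [μ.IsAddHaarMeasure] {s : Set E} (hs : μ s = 0) {G : E → E} (hG : Continuous G) {δ : ℝ}
    (hδ : 0 < δ) :
    ∃ P : E → E, Continuous P ∧ (∀ y, dist (P y) (G y) < δ) ∧ ∀ y ∈ s, P y ≠ 0 := by
  obtain ⟨P, hP, hPG, -⟩ := hG.exists_contDiff_approx 1 (ε := fun _ => δ / 2)
    continuous_const fun _ => half_pos hδ
  have hnull : μ (P '' s) = 0 := addHaar_image_eq_zero_of_differentiableOn_of_addHaar_eq_zero μ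
    (hP.differentiable one_ne_zero).differentiableOn hs
  obtain ⟨q, hq, hqP⟩ : ∃ q ∈ Metric.ball (0 : E) (δ / 2), q ∉ P '' s :=
    Set.not_subset.1 fun hsub => (Metric.measure_ball_pos μ (0 : E) (half_pos hδ)).ne'
      (measure_mono_null hsub hnull)
  refine ⟨fun y => P y - q, hP.continuous.sub continuous_const, fun y => ?_, fun y hy hzero =>
    hqP ⟨y, hy, sub_eq_zero.1 hzero⟩⟩
  calc dist (P y - q) (G y) ≤ dist (P y - q) (P y) + dist (P y) (G y) := dist_triangle ..
    _ < δ / 2 + δ / 2 := by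
      refine add_lt_add ?_ (hPG y)
      simpa [dist_eq_norm] using hq
    _ = δ := add_halves δ

lemma exists_approx_ne_zero_of_notMem_nhds {C : Set E} (hC : IsCompact C) {p : E} (hp : C ∉ 𝓝 p)
    {G : E → E} (hG : Continuous G) (hG0 : ∀ y ∈ C, y ≠ p → G y ≠ 0) {ε : ℝ} (hε : 0 < ε) :
    ∃ P : E → E, ContinuousOn P C ∧ (∀ y ∈ C, dist (P y) (G y) ≤ ε) ∧ ∀ y ∈ C, P y ≠ 0 := by
  obtain ⟨ρ, hρ, hGρ⟩ := Metric.continuous_iff.1 hG p (ε / 3) (by positivity)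
  -- Pushed off a ball around a centre `c ∉ C`, the part of `C` near `p` lands on a null sphere.
  obtain ⟨c, hcp, hcC⟩ : ∃ c ∈ Metric.ball p (ρ / 2), c ∉ C := Set.not_subset.1 fun hsub =>
    hp (mem_of_superset (Metric.ball_mem_nhds p (half_pos hρ)) hsub)
  have hGc : ∀ y, dist y c ≤ ρ / 2 → dist (G y) (G p) < ε / 3 := fun y hy =>
    hGρ y (by linarith [dist_triangle y c p, Metric.mem_ball.1 hcp])
  obtain ⟨δ, hδ, hGδ⟩ : ∃ δ > 0, ∀ y ∈ C ∩ {y | ρ / 2 ≤ dist y c}, δ ≤ ‖G y‖ := by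
    refine (hC.inter_right (isClosed_le continuous_const (by fun_prop))).exists_forall_le'
      hG.norm.continuousOn fun y hy => norm_pos_iff.2 (hG0 y hy.1 ?_)
    rintro rfl
    exact (Metric.mem_ball'.1 hcp).not_ge hy.2
  borelize E
  obtain ⟨P, hP, hPG, hP0⟩ := exists_approx_ne_zero_of_addHaar_eq_zero Measure.addHaar
    (Measure.addHaar_sphere_of_ne_zero Measure.addHaar c (half_pos hρ).ne') hG
    (show 0 < min δ (ε / 3) by positivity)
  have hpush : ∀ y ∈ C, dist y c ≤ ρ / 2 → dist (pushAway c (ρ / 2) y) c = ρ / 2 :=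
    fun y hy => dist_pushAway_of_dist_le (half_pos hρ).le (ne_of_mem_of_not_mem hy hcC)
  refine ⟨P ∘ pushAway c (ρ / 2), hP.comp_continuousOn (continuousOn_pushAway.mono fun y hy =>
    ne_of_mem_of_not_mem hy hcC), fun y hy => ?_, fun y hy => ?_⟩ <;>
    rw [Function.comp_apply] <;> rcases le_total (ρ / 2) (dist y c) with hyc | hyc
  · rw [pushAway_of_le_dist hyc]
    exact ((hPG y).trans_le (min_le_right _ _)).le.trans (by linarith)
  · set y' := pushAway c (ρ / 2) y
    have h₁ : dist (P y') (G y') < ε / 3 := (hPG y').trans_le (min_le_right _ _)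
    have h₂ : dist (G y') (G p) < ε / 3 := hGc y' (hpush y hy hyc).le
    have h₃ : dist (G p) (G y) < ε / 3 := dist_comm (G p) (G y) ▸ hGc y hyc
    linarith [dist_triangle4 (P y') (G y') (G p) (G y)]
  · rw [pushAway_of_le_dist hyc]
    intro hzero
    have hlt := (hPG y).trans_le (min_le_left _ _)
    rw [hzero, dist_zero_left] at hlt
    exact (hGδ y ⟨hy, hyc⟩).not_gt hlt
  · exact hP0 _ (hpush y hy hyc)

lemma image_closedBall_mem_nhds {E : Type*} [NormedAddCommGroup E] [InnerProductSpace ℝ E]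
    [FiniteDimensional ℝ E] {f : E → E} (hf : ContinuousOn f (Metric.closedBall 0 1))
    (hinj : Set.InjOn f (Metric.closedBall 0 1)) : f '' Metric.closedBall 0 1 ∈ 𝓝 (f 0) := by
  by_contra hnhds
  have hball : IsCompact (Metric.closedBall (0 : E) 1) := isCompact_closedBall 0 1
  obtain ⟨G, hG, hGf⟩ := exists_continuous_leftInvOn hball hf hinj
  obtain ⟨P, hP, hPG, hP0⟩ := exists_approx_ne_zero_of_notMem_nhds
    (hball.image_of_continuousOn hf) hnhds hG (by
      rintro _ ⟨x, hx, rfl⟩ hne hzero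
      rw [hGf hx] at hzero
      exact hne (by rw [hzero])) one_pos
  obtain ⟨x, hx, hfix⟩ := brouwer_fixedPoint (f := fun x => x - P (f x))
    (continuousOn_id.sub (hP.comp hf (Set.mapsTo_image f _))) fun x hx => by
      simpa [hGf hx, dist_eq_norm, norm_sub_rev] using hPG (f x) (Set.mem_image_of_mem f hx)
  exact hP0 (f x) (Set.mem_image_of_mem f hx) (sub_eq_self.1 hfix)

lemma isOpen_image_of_injOn {E : Type*} [NormedAddCommGroup E] [InnerProductSpace ℝ E]
    [FiniteDimensional ℝ E] {f : E → E} {U : Set E} (hU : IsOpen U) (hf : ContinuousOn f U)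
    (hinj : Set.InjOn f U) : IsOpen (f '' U) := by
  rw [isOpen_iff_mem_nhds]
  rintro _ ⟨x, hx, rfl⟩
  obtain ⟨r, hr, hrU⟩ := Metric.nhds_basis_closedBall.mem_iff.1 (hU.mem_nhds hx)
  have hmaps : Set.MapsTo (fun v => x + r • v) (Metric.closedBall 0 1) U := fun v hv =>
    hrU <| by
      have hv1 := mem_closedBall_zero_iff.1 hv
      simpa [norm_smul, abs_of_pos hr] using mul_le_of_le_one_right hr.le hv1
  have hnhds := image_closedBall_mem_nhds (f := f ∘ fun v => x + r • v)
    (hf.comp (by fun_prop) hmaps) (hinj.comp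
      (fun a _ b _ hab => smul_right_injective E hr.ne' (add_left_cancel hab)) hmaps)
  rw [Function.comp_apply, smul_zero, add_zero, Set.image_comp] at hnhds
  exact mem_of_superset hnhds (Set.image_mono hmaps.image_subset)

variable {F : Type*} [NormedAddCommGroup F] [NormedSpace ℝ F] [FiniteDimensional ℝ F]

theorem invariance_of_domain (hdim : Module.finrank ℝ E = Module.finrank ℝ F) {f : E → F}
    {U : Set E} (hU : IsOpen U) (hf : ContinuousOn f U) (hinj : Set.InjOn f U) :
    IsOpen (f '' U) := by
  let e₁ : Euc (Module.finrank ℝ E) ≃L[ℝ] E := ContinuousLinearEquiv.ofFinrankEq (by simp)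
  let e₂ : F ≃L[ℝ] Euc (Module.finrank ℝ E) := ContinuousLinearEquiv.ofFinrankEq (by simp [hdim])
  have hopen : IsOpen ((e₂ ∘ f ∘ e₁) '' (e₁ ⁻¹' U)) :=
    isOpen_image_of_injOn (hU.preimage e₁.continuous)
      (e₂.continuous.comp_continuousOn (hf.comp e₁.continuous.continuousOn fun _ h => h))
      fun a ha b hb hab => e₁.injective (hinj ha hb (e₂.injective hab))
  rw [Set.image_comp, Set.image_comp, Set.image_preimage_eq U e₁.surjective] at hopen
  exact e₂.toHomeomorph.isOpen_image.1 hopen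

theorem finrank_le_of_continuousOn_injOn {f : E → F} {U : Set E} (hU : IsOpen U)
    (hne : U.Nonempty) (hf : ContinuousOn f U) (hinj : Set.InjOn f U) :
    Module.finrank ℝ E ≤ Module.finrank ℝ F := by
  by_contra! hlt
  obtain ⟨k, hk⟩ := Nat.exists_eq_add_of_lt hlt
  have hopen := invariance_of_domain (F := F × Euc (k + 1)) (by simp [hk, add_assoc]) hU
    (f := fun x => (f x, 0)) (hf.prodMk continuousOn_const)
    fun a ha b hb hab => hinj ha hb (Prod.ext_iff.1 hab).1
  obtain ⟨x, hx⟩ := hne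
  have hslice : (fun v : Euc (k + 1) => (f x, v)) ⁻¹' ((fun x => (f x, 0)) '' U) = {0} := by
    ext v
    refine ⟨fun ⟨y, _, hy⟩ => (Prod.ext_iff.1 hy).2.symm, fun hv => ⟨x, hx, by rw [hv]⟩⟩
  exact not_isOpen_singleton (0 : Euc (k + 1))
    (hslice ▸ hopen.preimage (by fun_prop))

end InvarianceOfDomain

section EuclideanChart

variable {F F' X : Type*} [NormedAddCommGroup F] [NormedSpace ℝ F] [NormedAddCommGroup F']
  [NormedSpace ℝ F'] [TopologicalSpace X]

/-- `ψ` maps the compact neighbourhood `D` of `0` in a vector space homeomorphically onto a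
neighbourhood of `x` in `S`. -/
structure IsEuclideanChart (ψ : F → X) (D : Set F) (S : Set X) (x : X) : Prop where
  isCompact : IsCompact D
  mem_nhds : D ∈ 𝓝 0
  continuousOn : ContinuousOn ψ D
  injOn : Set.InjOn ψ D
  map_zero : ψ 0 = x
  image_subset : ψ '' D ⊆ S
  image_mem_nhdsWithin : ψ '' D ∈ 𝓝[S] x

lemma IsEuclideanChart.comp_continuousLinearEquiv {ψ : F → X} {D : Set F} {S : Set X}
    {x : X} (hψ : IsEuclideanChart ψ D S x) (e : F' ≃L[ℝ] F) :
    IsEuclideanChart (ψ ∘ e) (e ⁻¹' D) S x where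
  isCompact := e.toHomeomorph.isCompact_preimage.2 hψ.isCompact
  mem_nhds := e.continuous.continuousAt (by simpa using hψ.mem_nhds)
  continuousOn := hψ.continuousOn.comp e.continuous.continuousOn (Set.mapsTo_preimage e D)
  injOn := hψ.injOn.comp e.injective.injOn (Set.mapsTo_preimage e D)
  map_zero := by simp [hψ.map_zero]
  image_subset := by
    rw [Set.image_comp, e.surjective.image_preimage]
    exact hψ.image_subset
  image_mem_nhdsWithin := by
    rw [Set.image_comp, e.surjective.image_preimage]
    exact hψ.image_mem_nhdsWithin

end EuclideanChart

section Cone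

variable {r : ℕ}

lemma nonneg_of_mem_Tcone_of_le_one (hr : r ≤ 1) {p : ℝ × ℝ} (hp : p ∈ Tcone r) :
    0 ≤ p.1 ∧ p.2 = 0 := by
  rcases hp with rfl | hp
  · exact ⟨le_rfl, rfl⟩
  · obtain ⟨k, hk, t, ht, -, rfl⟩ := Set.mem_iUnion₂.1 hp
    obtain rfl : k = 0 := by
      have := Finset.mem_range.1 hk
      omega
    simpa using ht

lemma smul_mem_Tcone {k : ℕ} (hk : k < r) (t : ℝ) :
    (|t| / (1 + |t|)) • ((1 : ℝ), (k : ℝ)) ∈ Tcone r := by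
  refine Or.inr (Set.mem_iUnion₂.2 ⟨k, Finset.mem_range.2 hk, _, by positivity, ?_, rfl⟩)
  rw [div_lt_one (by positivity)]
  exact lt_one_add |t|

/-- The `k`-th ray of the open cone on `r` points, parametrised by `|t| / (1 + |t|)` so as to be
defined for every real `t`. -/
def coneRay {k : ℕ} (hk : k < r) (t : ℝ) : Tcone r :=
  ⟨(|t| / (1 + |t|)) • ((1 : ℝ), (k : ℝ)), smul_mem_Tcone hk t⟩

lemma continuous_coneRay {k : ℕ} (hk : k < r) : Continuous (coneRay hk) := by
  have hcont : Continuous fun t : ℝ => |t| / (1 + |t|) :=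
    Continuous.div (by fun_prop) (by fun_prop) fun t => by positivity
  exact (hcont.smul continuous_const).subtype_mk _

lemma coneRay_zero {k : ℕ} (hk : k < r) : (coneRay hk 0 : ℝ × ℝ) = 0 := by simp [coneRay]

lemma coneRay_eq_coneRay {k k' : ℕ} {hk : k < r} {hk' : k' < r} {t t' : ℝ}
    (h : coneRay hk t = coneRay hk' t') : |t| = |t'| ∧ (t ≠ 0 → k = k') := by
  obtain ⟨h₁, h₂⟩ := Prod.ext_iff.1 (congrArg Subtype.val h)
  simp only [coneRay, Prod.smul_mk, smul_eq_mul, mul_one] at h₁ h₂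
  refine ⟨?_, fun ht => ?_⟩
  · rw [div_eq_div_iff (by positivity) (by positivity)] at h₁
    linarith
  · rw [h₁] at h₂
    have hne : |t'| / (1 + |t'|) ≠ 0 := h₁ ▸ by positivity
    exact_mod_cast mul_left_cancel₀ hne h₂

/-- The line formed by the rays `0` and `1` of the open cone on `r ≥ 2` points. -/
def coneLine (hr : 2 ≤ r) (t : ℝ) : Tcone r :=
  if 0 ≤ t then coneRay (k := 0) (by omega) t else coneRay (k := 1) (by omega) t

lemma coneLine_zero (hr : 2 ≤ r) : (coneLine hr 0 : ℝ × ℝ) = 0 := by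
  rw [coneLine, if_pos le_rfl, coneRay_zero]

lemma continuous_coneLine (hr : 2 ≤ r) : Continuous (coneLine hr) := by
  refine Continuous.if_le (continuous_coneRay _) (continuous_coneRay _) continuous_const
    continuous_id fun t ht => Subtype.ext ?_
  rw [← ht, coneRay_zero, coneRay_zero]

lemma injective_coneLine (hr : 2 ≤ r) : Function.Injective (coneLine hr) := by
  intro a b hab
  by_cases ha : 0 ≤ a <;> by_cases hb : 0 ≤ b <;>
    simp only [coneLine, ha, hb, if_true, if_false] at hab <;>
    obtain ⟨habs, hk⟩ := coneRay_eq_coneRay hab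
  · rwa [abs_of_nonneg ha, abs_of_nonneg hb] at habs
  · rw [abs_of_nonneg ha, abs_of_neg (not_le.1 hb)] at habs
    exact absurd (hk (by linarith)) zero_ne_one
  · exact absurd (hk (by linarith)) one_ne_zero
  · rwa [abs_of_neg (not_le.1 ha), abs_of_neg (not_le.1 hb), neg_inj] at habs

lemma coneLine_ne_coneRay (hr : 2 ≤ r) {k : ℕ} (hk : k < r) (hk2 : 2 ≤ k) {s t : ℝ} (ht : t ≠ 0) :
    coneRay hk t ≠ coneLine hr s := by
  rw [coneLine]
  split_ifs <;> intro h <;> have := (coneRay_eq_coneRay h).2 ht <;> omega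

variable {F F' : Type*} [NormedAddCommGroup F] [NormedSpace ℝ F] [FiniteDimensional ℝ F]
  [NormedAddCommGroup F'] [NormedSpace ℝ F'] [FiniteDimensional ℝ F']

lemma two_le_of_injOn_to_Tcone (hdim : Module.finrank ℝ F = Module.finrank ℝ F' + 1)
    {f : F → Tcone r × F'} {U : Set F} (hU : IsOpen U) (hf : ContinuousOn f U)
    (hinj : Set.InjOn f U) {v : F} (hv : v ∈ U) (hfv : ((f v).1 : ℝ × ℝ) = 0) : 2 ≤ r := by
  by_contra! hr
  have hcone : ∀ u, 0 ≤ ((f u).1 : ℝ × ℝ).1 ∧ ((f u).1 : ℝ × ℝ).2 = 0 := fun u =>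
    nonneg_of_mem_Tcone_of_le_one (by omega) (f u).1.2
  let g : F → ℝ × F' := fun u => (((f u).1 : ℝ × ℝ).1, (f u).2)
  have hg : ContinuousOn g U :=
    Continuous.comp_continuousOn (g := fun p : Tcone r × F' => ((p.1 : ℝ × ℝ).1, p.2))
      (by fun_prop) hf
  have hginj : Set.InjOn g U := fun a ha b hb hab => by
    obtain ⟨h₁, h₂⟩ := Prod.ext_iff.1 hab
    exact hinj ha hb (Prod.ext (Subtype.ext (Prod.ext h₁
      ((hcone a).2.trans (hcone b).2.symm))) h₂)
  have hopen : IsOpen (g '' U) := invariance_of_domain (by simp [hdim, add_comm]) hU hg hginj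
  have hhalf : g '' U ⊆ Set.Ici 0 ×ˢ Set.univ := by
    rintro _ ⟨u, -, rfl⟩
    exact ⟨(hcone u).1, Set.mem_univ _⟩
  have hpos := (interior_maximal hhalf hopen) (Set.mem_image_of_mem g hv)
  rw [interior_prod_eq, interior_Ici] at hpos
  exact hpos.1.ne' (congrArg Prod.fst hfv)

lemma le_two_of_injOn_from_Tcone (hdim : Module.finrank ℝ F = Module.finrank ℝ F' + 1)
    {f : Tcone r × F' → F} {U : Set (Tcone r × F')} (hU : IsOpen U) (hf : ContinuousOn f U)
    (hinj : Set.InjOn f U) {p : Tcone r × F'} (hp : p ∈ U) (hp0 : (p.1 : ℝ × ℝ) = 0) : r ≤ 2 := by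
  by_contra! hr
  let line : ℝ × F' → Tcone r × F' := fun q => (coneLine hr.le q.1, q.2)
  have hline : Continuous line := ((continuous_coneLine hr.le).comp continuous_fst).prodMk
    continuous_snd
  have hline_inj : Function.Injective line := fun a b hab =>
    Prod.ext (injective_coneLine hr.le (Prod.ext_iff.1 hab).1) (Prod.ext_iff.1 hab).2
  have hline0 : line (0, p.2) = p :=
    Prod.ext (Subtype.ext ((coneLine_zero hr.le).trans hp0.symm)) rfl
  have hopen : IsOpen (f ∘ line '' (line ⁻¹' U)) :=
    invariance_of_domain (by simp [hdim, add_comm]) (hU.preimage hline)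
      (hf.comp hline.continuousOn (Set.mapsTo_preimage line U))
      (hinj.comp hline_inj.injOn (Set.mapsTo_preimage line U))
  let ray : ℝ → Tcone r × F' := fun t => (coneRay hr t, p.2)
  have hray : Continuous ray := (continuous_coneRay hr).prodMk continuous_const
  have hray0 : ray 0 = p := Prod.ext (Subtype.ext ((coneRay_zero hr).trans hp0.symm)) rfl
  have hrayU : ∀ᶠ t in 𝓝 0, ray t ∈ U :=
    hray.continuousAt.eventually (hU.mem_nhds (hray0.symm ▸ hp))
  have hray_line : ∀ᶠ t in 𝓝 0, f (ray t) ∈ f ∘ line '' (line ⁻¹' U) := by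
    have hcont : ContinuousAt (f ∘ ray) 0 :=
      (hf.continuousAt (hU.mem_nhds (hray0.symm ▸ hp))).comp hray.continuousAt
    refine hcont.eventually (hopen.mem_nhds ⟨(0, p.2), ?_, ?_⟩)
    · rwa [Set.mem_preimage, hline0]
    · rw [Function.comp_apply, Function.comp_apply, hline0, hray0]
  obtain ⟨t, ⟨htU, q, hq, hqt⟩, ht⟩ :=
    (((hrayU.and hray_line).filter_mono nhdsWithin_le_nhds).and
      (self_mem_nhdsWithin : {(0 : ℝ)}ᶜ ∈ 𝓝[≠] 0)).exists
  exact coneLine_ne_coneRay hr.le hr le_rfl ht (congrArg Prod.fst (hinj htU hq hqt.symm))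

namespace IsEuclideanChart

variable {X : Type*} [TopologicalSpace X] {ψ : F → X} {D : Set F} {S U : Set X} {x : X}

lemma two_le_of_homeomorph (hψ : IsEuclideanChart ψ D S x)
    (hdim : Module.finrank ℝ F = Module.finrank ℝ F' + 1) (hU : U ∈ 𝓝[S] x) (hx : x ∈ U)
    (h : U ≃ₜ Tcone r × F') (hapex : ((h ⟨x, hx⟩).1 : ℝ × ℝ) = 0) : 2 ≤ r := by
  let k : X → Tcone r × F' := Function.extend Subtype.val h fun _ => h ⟨x, hx⟩
  have hk : ∀ y (hy : y ∈ U), k y = h ⟨y, hy⟩ := fun y hy =>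
    Subtype.val_injective.extend_apply h _ ⟨y, hy⟩
  have hkU : ContinuousOn k U := continuousOn_iff_continuous_domRestrict.2
    (h.continuous.congr fun y => (hk y y.2).symm)
  have hkinj : Set.InjOn k U := fun a ha b hb hab => by
    rw [hk a ha, hk b hb] at hab
    exact congrArg Subtype.val (h.injective hab)
  have hcont : ContinuousAt ψ 0 := hψ.continuousOn.continuousAt hψ.mem_nhds
  have htendsto : Tendsto ψ (𝓝 0) (𝓝[S] x) := tendsto_nhdsWithin_iff.2
    ⟨by simpa only [hψ.map_zero] using hcont.tendsto, mem_of_superset hψ.mem_nhds fun v hv =>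
      hψ.image_subset (Set.mem_image_of_mem ψ hv)⟩
  obtain ⟨O, hOU, hO, h0O⟩ := mem_nhds_iff.1 (inter_mem hψ.mem_nhds (htendsto hU))
  refine two_le_of_injOn_to_Tcone hdim hO
    (hkU.comp (hψ.continuousOn.mono fun v hv => (hOU hv).1) fun v hv => (hOU hv).2)
    (hkinj.comp (hψ.injOn.mono fun v hv => (hOU hv).1) fun v hv => (hOU hv).2) h0O ?_
  rw [Function.comp_apply, hψ.map_zero, hk x hx, hapex]

variable [T2Space X] [NormalSpace X]

lemma le_two_of_homeomorph (hψ : IsEuclideanChart ψ D S x)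
    (hdim : Module.finrank ℝ F = Module.finrank ℝ F' + 1) (hUS : U ⊆ S) (hx : x ∈ U)
    (h : U ≃ₜ Tcone r × F') (hapex : ((h ⟨x, hx⟩).1 : ℝ × ℝ) = 0) : r ≤ 2 := by
  obtain ⟨θ, hθ, hθψ⟩ := exists_continuous_leftInvOn hψ.isCompact hψ.continuousOn hψ.injOn
  let l : Tcone r × F' → X := fun q => h.symm q
  have hl : Continuous l := continuous_subtype_val.comp h.symm.continuous
  have hlx : l (h ⟨x, hx⟩) = x := by simp [l]
  have htendsto : Tendsto l (𝓝 (h ⟨x, hx⟩)) (𝓝[S] x) := tendsto_nhdsWithin_iff.2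
    ⟨by simpa only [hlx] using hl.tendsto (h ⟨x, hx⟩),
      Eventually.of_forall fun q => hUS (h.symm q).2⟩
  obtain ⟨O, hOψ, hO, hxO⟩ := mem_nhds_iff.1 (htendsto hψ.image_mem_nhdsWithin)
  refine le_two_of_injOn_from_Tcone hdim hO (hθ.comp hl).continuousOn ?_ hxO hapex
  have hθinj : Set.InjOn θ (ψ '' D) := by
    rintro _ ⟨a, ha, rfl⟩ _ ⟨b, hb, rfl⟩ hab
    rw [hθψ ha, hθψ hb] at hab
    rw [hab]
  exact hθinj.comp (Subtype.val_injective.comp h.symm.injective).injOn hOψ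

theorem eq_two_of_homeomorph (hψ : IsEuclideanChart ψ D S x)
    (hdim : Module.finrank ℝ F = Module.finrank ℝ F' + 1) (hU : U ∈ 𝓝[S] x) (hUS : U ⊆ S)
    (hx : x ∈ U) (h : U ≃ₜ Tcone r × F') (hapex : ((h ⟨x, hx⟩).1 : ℝ × ℝ) = 0) : r = 2 :=
  (hψ.le_two_of_homeomorph hdim hUS hx h hapex).antisymm
    (hψ.two_le_of_homeomorph hdim hU hx h hapex)

end IsEuclideanChart

end Cone


section GenericPoint

variable {F E : Type*} [NormedAddCommGroup F] [NormedSpace ℝ F] [FiniteDimensional ℝ F]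
  [NormedAddCommGroup E] [NormedSpace ℝ E]

lemma sub_mem_vectorSpan_of_mem_convexHull {s : Set E} {x y : E} (hx : x ∈ convexHull ℝ s)
    (hy : y ∈ convexHull ℝ s) : x - y ∈ vectorSpan ℝ s := by
  rw [← direction_affineSpan]
  exact AffineSubspace.vsub_mem_direction (convexHull_subset_affineSpan s hx)
    (convexHull_subset_affineSpan s hy)

lemma finrank_vectorSpan_lt_card {s : Finset E} (hs : s.Nonempty) :
    Module.finrank ℝ (vectorSpan ℝ (s : Set E)) < s.card := by
  have hcard : s.card = s.card - 1 + 1 := (Nat.sub_add_cancel hs.card_pos).symm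
  have := finrank_vectorSpan_image_finset_le ℝ id s hcard
  rw [Finset.image_id] at this
  omega

lemma interior_preimage_convexHull_eq_empty {φ : F → E} (hφ : Continuous φ)
    (hinj : Function.Injective φ) {s : Finset E} (hs : s.card ≤ Module.finrank ℝ F) :
    interior (φ ⁻¹' convexHull ℝ (s : Set E)) = ∅ := by
  by_contra! hne
  obtain ⟨y₀, hy₀⟩ := hne
  let W := vectorSpan ℝ (s : Set E)
  have : FiniteDimensional ℝ W := finiteDimensional_vectorSpan_of_finite ℝ s.finite_toSet
  obtain ⟨π, hπ⟩ := Submodule.ClosedComplemented.of_finiteDimensional W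
  have hhull : ∀ y ∈ interior (φ ⁻¹' convexHull ℝ (s : Set E)), φ y ∈ convexHull ℝ (s : Set E) :=
    interior_subset
  have hsne : s.Nonempty :=
    Finset.coe_nonempty.1 (convexHull_nonempty_iff.1 ⟨φ y₀, hhull y₀ hy₀⟩)
  have hW : ∀ y ∈ interior (φ ⁻¹' convexHull ℝ (s : Set E)), φ y - φ y₀ ∈ W := fun y hy =>
    sub_mem_vectorSpan_of_mem_convexHull (hhull y hy) (hhull y₀ hy₀)
  have hinjOn :
      Set.InjOn (fun y => π (φ y - φ y₀)) (interior (φ ⁻¹' convexHull ℝ (s : Set E))) := by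
    intro a ha b hb hab
    have hval := (hπ ⟨_, hW a ha⟩).symm.trans (hab.trans (hπ ⟨_, hW b hb⟩))
    exact hinj (sub_left_injective (congrArg Subtype.val hval))
  have hle : Module.finrank ℝ F ≤ Module.finrank ℝ W :=
    finrank_le_of_continuousOn_injOn isOpen_interior ⟨y₀, hy₀⟩ (by fun_prop) hinjOn
  exact absurd (hle.trans_lt (finrank_vectorSpan_lt_card hsne)) hs.not_gt

lemma exists_notMem_convexHull_of_countable {φ : F → E} (hφ : Continuous φ)
    (hinj : Function.Injective φ) {𝒮 : Set (Finset E)} (h𝒮 : 𝒮.Countable)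
    (hcard : ∀ s ∈ 𝒮, s.card ≤ Module.finrank ℝ F) {V : Set E} (hV : IsOpen V)
    (hφV : (φ ⁻¹' V).Nonempty) :
    ∃ y, φ y ∈ V ∧ ∀ s ∈ 𝒮, φ y ∉ convexHull ℝ (s : Set E) := by
  have hdense : Dense (⋂ s ∈ 𝒮, (φ ⁻¹' convexHull ℝ (s : Set E))ᶜ) :=
    dense_biInter_of_isOpen
      (fun s _ => ((s.finite_toSet.isClosed_convexHull ℝ).preimage hφ).isOpen_compl) h𝒮
      fun s hs => interior_eq_empty_iff_dense_compl.1
        (interior_preimage_convexHull_eq_empty hφ hinj (hcard s hs))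
  obtain ⟨y, hyV, hy⟩ := hdense.inter_open_nonempty _ (hV.preimage hφ) hφV
  exact ⟨y, hyV, Set.mem_iInter₂.1 hy⟩

end GenericPoint

section Charts

variable {E : Type*} [NormedAddCommGroup E] [NormedSpace ℝ E]

lemma vectorSpan_le_span_range_sub (s : Finset E) (z : E) :
    vectorSpan ℝ (s : Set E) ≤ Submodule.span ℝ (Set.range fun y : s => (y : E) - z) := by
  rw [vectorSpan_def, Submodule.span_le]
  rintro _ ⟨a, ha, b, hb, rfl⟩
  change a - b ∈ _
  rw [← sub_sub_sub_cancel_right a b z]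
  exact sub_mem (Submodule.subset_span ⟨⟨a, ha⟩, rfl⟩) (Submodule.subset_span ⟨⟨b, hb⟩, rfl⟩)

lemma add_sum_smul_sub_mem_convexHull {s : Finset E} {w : E → ℝ} (hw : ∀ y ∈ s, 0 ≤ w y)
    (hw1 : ∑ y ∈ s, w y = 1) {c : s → ℝ} (hc : ∀ i, 0 ≤ c i) (hc1 : ∑ i, c i ≤ 1) :
    ∑ y ∈ s, w y • y + ∑ i, c i • ((i : E) - ∑ y ∈ s, w y • y) ∈ convexHull ℝ (s : Set E) := by
  have hz : ∑ y ∈ s, w y • y ∈ convexHull ℝ (s : Set E) :=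
    Finset.mem_convexHull'.2 ⟨w, hw, hw1, rfl⟩
  set z := ∑ y ∈ s, w y • y with hzw
  have hsum : z + ∑ i, c i • ((i : E) - z) = ∑ i : s, (c i + (1 - ∑ j, c j) * w i) • (i : E) := by
    simp only [add_smul, mul_smul, smul_sub, Finset.sum_add_distrib, Finset.sum_sub_distrib,
      ← Finset.smul_sum, ← Finset.sum_smul, Finset.sum_coe_sort s fun y => w y • y, ← hzw]
    module
  rw [hsum]
  refine (convex_convexHull ℝ _).sum_mem
    (fun i _ => add_nonneg (hc i) (mul_nonneg (sub_nonneg.2 hc1) (hw i i.2))) ?_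
    fun i _ => subset_convexHull ℝ _ i.2
  rw [Finset.sum_add_distrib, ← Finset.mul_sum, Finset.sum_coe_sort s w, hw1]
  ring

lemma eventually_add_mem_convexHull {s : Finset E} {w : E → ℝ} (hw : ∀ y ∈ s, 0 < w y)
    (hw1 : ∑ y ∈ s, w y = 1) :
    ∀ᶠ v : vectorSpan ℝ (s : Set E) in 𝓝 0, ∑ y ∈ s, w y • y + v ∈ convexHull ℝ (s : Set E) := by
  have hz : ∑ y ∈ s, w y • y ∈ convexHull ℝ (s : Set E) :=
    Finset.mem_convexHull'.2 ⟨w, fun y hy => (hw y hy).le, hw1, rfl⟩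
  set z := ∑ y ∈ s, w y • y with hzw
  have : FiniteDimensional ℝ (vectorSpan ℝ (s : Set E)) :=
    finiteDimensional_vectorSpan_of_finite ℝ s.finite_toSet
  let G : (s → ℝ) →ₗ[ℝ] vectorSpan ℝ (s : Set E) := Fintype.linearCombination ℝ fun i : s =>
    ⟨i - z, sub_mem_vectorSpan_of_mem_convexHull (subset_convexHull ℝ _ i.2) hz⟩
  have hG : ∀ c, (G c : E) = ∑ i, c i • ((i : E) - z) := fun c => by
    simp [G, Fintype.linearCombination_apply]
  have hsurj : Function.Surjective G := fun v => by
    obtain ⟨c, hc⟩ :=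
      (Submodule.mem_span_range_iff_exists_fun ℝ).1 (vectorSpan_le_span_range_sub s z v.2)
    exact ⟨c, Subtype.ext ((hG c).trans hc)⟩
  -- Halving the weights makes room for a perturbation in every direction.
  let c₀ : s → ℝ := fun i => w i / 2
  have hc₀ : G c₀ = 0 := Subtype.ext <| by
    simp only [hG, c₀, div_eq_inv_mul, mul_smul, ← Finset.smul_sum, smul_sub,
      Finset.sum_sub_distrib, ← Finset.sum_smul, Finset.sum_coe_sort s w,
      Finset.sum_coe_sort s fun y => w y • y, hw1, ← hzw]
    simp
  have hpos : ∀ᶠ c in 𝓝 c₀, ∀ i, 0 < c i := eventually_all.2 fun i =>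
    (continuous_apply i).continuousAt.eventually (lt_mem_nhds (half_pos (hw i i.2)))
  have hlt : ∀ᶠ c in 𝓝 c₀, ∑ i, c i < 1 := by
    refine ContinuousAt.eventually_lt (by fun_prop) continuousAt_const ?_
    rw [← Finset.sum_div, Finset.sum_coe_sort s w, hw1]
    norm_num
  have hmap := (G.isOpenMap_of_finiteDimensional hsurj).image_mem_nhds (hpos.and hlt)
  rw [hc₀] at hmap
  filter_upwards [hmap]
  rintro _ ⟨c, ⟨hc, hc1⟩, rfl⟩
  rw [hG]
  exact add_sum_smul_sub_mem_convexHull (fun y hy => (hw y hy).le) hw1 (fun i => (hc i).le) hc1.le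

variable {V : Submodule ℝ E} {C S : Set E} {z : E}

lemma image_add_setOf_add_mem (hCV : ∀ x ∈ C, x - z ∈ V) :
    (fun v : V => z + (v : E)) '' {v : V | z + v ∈ C} = C := by
  ext x
  constructor
  · rintro ⟨v, hv, rfl⟩
    exact hv
  · intro hx
    refine ⟨⟨x - z, hCV x hx⟩, ?_, ?_⟩ <;> simp [hx]

variable [FiniteDimensional ℝ V]

lemma isCompact_setOf_add_mem (hC : IsCompact C) : IsCompact {v : V | z + v ∈ C} :=
  ((Homeomorph.addLeft z).isClosedEmbedding.comp
    V.closed_of_finiteDimensional.isClosedEmbedding_subtypeVal).isCompact_preimage hC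

lemma isEuclideanChart_add (hC : IsCompact C) (hCV : ∀ x ∈ C, x - z ∈ V)
    (hnhds : ∀ᶠ v : V in 𝓝 0, z + v ∈ C) (hCS : C ⊆ S) (hCz : C ∈ 𝓝[S] z) :
    IsEuclideanChart (fun v : V => z + (v : E)) {v : V | z + v ∈ C} S z where
  isCompact := isCompact_setOf_add_mem hC
  mem_nhds := hnhds
  continuousOn := by fun_prop
  injOn := ((add_right_injective z).comp Subtype.val_injective).injOn
  map_zero := by simp
  image_subset := by rwa [image_add_setOf_add_mem hCV]
  image_mem_nhdsWithin := by rwa [image_add_setOf_add_mem hCV]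

end Charts

section Bipyramid

/-- The bipyramid over `B ⊆ V` in `V × ℝ`, with apexes `(0, 1)` and `(0, -1)`. -/
def bipyramid {V : Type*} [AddCommGroup V] [Module ℝ V] (B : Set V) : Set (V × ℝ) :=
  (fun q : V × ℝ => ((1 - |q.2|) • q.1, q.2)) '' B ×ˢ Set.Icc (-1) 1

lemma bipyramid_mem_nhds {V : Type*} [NormedAddCommGroup V] [NormedSpace ℝ V] {B : Set V}
    (hB : B ∈ 𝓝 0) : bipyramid B ∈ 𝓝 0 := by
  have hcont : ContinuousAt (fun q : V × ℝ => (1 - |q.2|)⁻¹ • q.1) 0 :=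
    (ContinuousAt.inv₀ (by fun_prop) (by simp)).smul continuousAt_fst
  have hbase : ∀ᶠ q : V × ℝ in 𝓝 0, (1 - |q.2|)⁻¹ • q.1 ∈ B :=
    hcont.eventually (by simpa using hB)
  have hheight : ∀ᶠ q : V × ℝ in 𝓝 0, |q.2| < 1 :=
    ContinuousAt.eventually_lt (by fun_prop) continuousAt_const (by simp)
  filter_upwards [hbase, hheight] with q hq hq1
  refine ⟨((1 - |q.2|)⁻¹ • q.1, q.2), ⟨hq, abs_le.1 hq1.le⟩, Prod.ext ?_ rfl⟩
  exact smul_inv_smul₀ (sub_pos.2 hq1).ne' q.1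

lemma mk_neg_mem_bipyramid {V : Type*} [AddCommGroup V] [Module ℝ V] {B : Set V} {v : V} {t : ℝ}
    (h : (v, t) ∈ bipyramid B) : (v, -t) ∈ bipyramid B := by
  obtain ⟨⟨u, s⟩, ⟨hu, hs, hs1⟩, hus⟩ := h
  obtain ⟨rfl, rfl⟩ := Prod.ext_iff.1 hus
  exact ⟨(u, -s), ⟨hu, neg_le_neg hs1, neg_le.1 hs⟩, by simp only [abs_neg]⟩

lemma isCompact_bipyramid {V : Type*} [NormedAddCommGroup V] [NormedSpace ℝ V] {B : Set V}
    (hB : IsCompact B) : IsCompact (bipyramid B) :=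
  (hB.prod isCompact_Icc).image (by fun_prop)

variable {E : Type*} [NormedAddCommGroup E] [NormedSpace ℝ E] {V : Submodule ℝ E} {C S : Set E}
  {z a b : E}

/-- The piecewise linear map `V × ℝ → E` that is the inclusion of `z + V` at height `0`, and sends
the vertical half-lines at `0` to the half-lines from `z` towards `a` and `b`. -/
def foldMap (V : Submodule ℝ E) (z a b : E) (q : V × ℝ) : E :=
  z + q.1 + max q.2 0 • (a - z) + max (-q.2) 0 • (b - z)

lemma continuous_foldMap : Continuous (foldMap V z a b) := by
  unfold foldMap
  fun_prop

lemma foldMap_neg (v : V) (t : ℝ) : foldMap V z a b (v, -t) = foldMap V z b a (v, t) := by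
  simp only [foldMap, neg_neg]
  abel

lemma foldMap_of_nonneg (v : V) {t : ℝ} (ht : 0 ≤ t) :
    foldMap V z a b (v, t) = z + v + t • (a - z) := by
  simp [foldMap, ht]

lemma foldMap_smul_of_nonneg (v : V) {t : ℝ} (ht : 0 ≤ t) :
    foldMap V z a b ((1 - |t|) • v, t) = AffineMap.lineMap (z + v : E) a t := by
  rw [foldMap_of_nonneg _ ht, abs_of_nonneg ht, AffineMap.lineMap_apply_module, Submodule.coe_smul]
  module

lemma foldMap_image_bipyramid_nonneg (hCV : ∀ x ∈ C, x - z ∈ V) :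
    foldMap V z a b '' {q ∈ bipyramid {v : V | z + v ∈ C} | 0 ≤ q.2} = convexJoin ℝ {a} C := by
  ext x
  rw [convexJoin_comm, convexJoin_singleton_right]
  simp only [Set.mem_iUnion₂, segment_eq_image_lineMap]
  constructor
  · rintro ⟨_, ⟨⟨⟨v, t⟩, ⟨hv, -, ht1⟩, rfl⟩, ht⟩, rfl⟩
    exact ⟨z + v, hv, t, ⟨ht, ht1⟩, (foldMap_smul_of_nonneg v ht).symm⟩
  · rintro ⟨y, hy, t, ⟨ht, ht1⟩, rfl⟩
    refine ⟨_, ⟨⟨(⟨y - z, hCV y hy⟩, t), ⟨?_, neg_one_lt_zero.le.trans ht, ht1⟩, rfl⟩, ht⟩, ?_⟩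
    · simpa using hy
    · rw [foldMap_smul_of_nonneg _ ht, add_sub_cancel]

lemma foldMap_image_bipyramid (hCV : ∀ x ∈ C, x - z ∈ V) :
    foldMap V z a b '' bipyramid {v : V | z + v ∈ C} = convexJoin ℝ {a} C ∪ convexJoin ℝ {b} C := by
  rw [← foldMap_image_bipyramid_nonneg (a := a) (b := b) hCV,
    ← foldMap_image_bipyramid_nonneg (a := b) (b := a) hCV]
  ext x
  constructor
  · rintro ⟨⟨v, t⟩, hq, rfl⟩
    rcases le_total 0 t with ht | ht
    · exact Or.inl ⟨_, ⟨hq, ht⟩, rfl⟩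
    · exact Or.inr ⟨_, ⟨mk_neg_mem_bipyramid hq, neg_nonneg.2 ht⟩, foldMap_neg v t⟩
  · rintro (⟨q, ⟨hq, -⟩, rfl⟩ | ⟨⟨v, t⟩, ⟨hq, -⟩, rfl⟩)
    · exact ⟨q, hq, rfl⟩
    · exact ⟨_, mk_neg_mem_bipyramid hq, foldMap_neg v t⟩

lemma foldMap_inj_of_nonneg (ha : a - z ∉ V) {v v' : V} {t t' : ℝ} (ht : 0 ≤ t) (ht' : 0 ≤ t')
    (h : foldMap V z a b (v, t) = foldMap V z a b (v', t')) : (v, t) = (v', t') := by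
  rw [foldMap_of_nonneg v ht, foldMap_of_nonneg v' ht', add_assoc, add_assoc, add_right_inj] at h
  have hmem : (t - t') • (a - z) ∈ V := by
    rw [sub_smul, sub_eq_sub_iff_add_eq_add.2 ((add_comm _ _).trans h)]
    exact (v' - v).2
  obtain rfl : t = t' := by
    by_contra hne
    exact ha ((V.smul_mem_iff (sub_ne_zero.2 hne)).1 hmem)
  exact Prod.ext (Subtype.ext (add_right_cancel h)) rfl

lemma eq_zero_of_foldMap_sub_mem (ha : a - z ∉ V) {v : V} {t : ℝ} (ht : 0 ≤ t)
    (h : foldMap V z a b (v, t) - z ∈ V) : t = 0 := by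
  have hv := foldMap_inj_of_nonneg (b := b) ha ht le_rfl (v' := ⟨_, h⟩)
    (by rw [foldMap_of_nonneg ⟨_, h⟩ le_rfl, zero_smul, add_zero, add_sub_cancel])
  exact (Prod.ext_iff.1 hv).2

lemma foldMap_inj_of_nonneg_of_nonpos (hCV : ∀ x ∈ C, x - z ∈ V) (ha : a - z ∉ V)
    (hb : b - z ∉ V) (hab : convexJoin ℝ {a} C ∩ convexJoin ℝ {b} C ⊆ C) {v v' : V} {t t' : ℝ}
    (ht : 0 ≤ t) (ht' : t' ≤ 0) (hq : (v, t) ∈ bipyramid {v : V | z + v ∈ C})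
    (hq' : (v', t') ∈ bipyramid {v : V | z + v ∈ C})
    (h : foldMap V z a b (v, t) = foldMap V z a b (v', t')) : (v, t) = (v', t') := by
  have hleft : foldMap V z a b (v, t) ∈ convexJoin ℝ {a} C :=
    foldMap_image_bipyramid_nonneg hCV ▸ Set.mem_image_of_mem _ ⟨hq, ht⟩
  have hright : foldMap V z b a (v', -t') ∈ convexJoin ℝ {b} C :=
    foldMap_image_bipyramid_nonneg hCV ▸
      Set.mem_image_of_mem _ ⟨mk_neg_mem_bipyramid hq', neg_nonneg.2 ht'⟩
  have hneg : foldMap V z b a (v', -t') = foldMap V z a b (v', t') := foldMap_neg v' t'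
  have hV : foldMap V z a b (v, t) - z ∈ V := hCV _ (hab ⟨hleft, h ▸ hneg ▸ hright⟩)
  have ht0 : -t' = 0 :=
    eq_zero_of_foldMap_sub_mem hb (neg_nonneg.2 ht') (v := v') (b := a) (by rwa [hneg, ← h])
  exact foldMap_inj_of_nonneg ha ht (neg_eq_zero.1 ht0).ge h

lemma injOn_foldMap_bipyramid (hCV : ∀ x ∈ C, x - z ∈ V) (ha : a - z ∉ V) (hb : b - z ∉ V)
    (hab : convexJoin ℝ {a} C ∩ convexJoin ℝ {b} C ⊆ C) :
    Set.InjOn (foldMap V z a b) (bipyramid {v : V | z + v ∈ C}) := by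
  rintro ⟨v, t⟩ hq ⟨v', t'⟩ hq' h
  rcases le_total 0 t with ht | ht <;> rcases le_total 0 t' with ht' | ht'
  · exact foldMap_inj_of_nonneg ha ht ht' h
  · exact foldMap_inj_of_nonneg_of_nonpos hCV ha hb hab ht ht' hq hq' h
  · exact (foldMap_inj_of_nonneg_of_nonpos hCV ha hb hab ht' ht hq' hq h.symm).symm
  · rw [← foldMap_neg v t, ← foldMap_neg v' t'] at h
    have hneg := Prod.ext_iff.1 (foldMap_inj_of_nonneg hb (neg_nonneg.2 ht) (neg_nonneg.2 ht') h)
    exact Prod.ext hneg.1 (neg_injective hneg.2)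

lemma isEuclideanChart_foldMap [FiniteDimensional ℝ V] (hC : IsCompact C)
    (hCV : ∀ x ∈ C, x - z ∈ V) (hnhds : ∀ᶠ v : V in 𝓝 0, z + v ∈ C) (ha : a - z ∉ V)
    (hb : b - z ∉ V) (hab : convexJoin ℝ {a} C ∩ convexJoin ℝ {b} C ⊆ C)
    (hCS : convexJoin ℝ {a} C ∪ convexJoin ℝ {b} C ⊆ S)
    (hCz : convexJoin ℝ {a} C ∪ convexJoin ℝ {b} C ∈ 𝓝[S] z) :
    IsEuclideanChart (foldMap V z a b) (bipyramid {v : V | z + v ∈ C}) S z where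
  isCompact := isCompact_bipyramid (isCompact_setOf_add_mem hC)
  mem_nhds := bipyramid_mem_nhds hnhds
  continuousOn := continuous_foldMap.continuousOn
  injOn := injOn_foldMap_bipyramid hCV ha hb hab
  map_zero := by simp [foldMap]
  image_subset := by rwa [foldMap_image_bipyramid hCV]
  image_mem_nhdsWithin := by rwa [foldMap_image_bipyramid hCV]

end Bipyramid

section Complex

variable {E : Type*} [NormedAddCommGroup E] [NormedSpace ℝ E] {K : SimplicialComplex ℝ E}

lemma mem_nhdsWithin_space (hK : LocallyFinite fun s : K.faces => convexHull ℝ (s : Set E)) {z : E}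
    {C : Set E} (hC : ∀ t ∈ K.faces, z ∈ convexHull ℝ (t : Set E) → convexHull ℝ (t : Set E) ⊆ C) :
    C ∈ 𝓝[K.space] z := by
  have hclosed : ∀ s : K.faces, IsClosed (convexHull ℝ (s : Set E)) := fun s =>
    s.1.finite_toSet.isClosed_convexHull ℝ
  refine mem_of_superset
    (inter_mem_nhdsWithin K.space (hK.iInter_compl_mem_nhds hclosed z)) fun x hx => ?_
  obtain ⟨t, ht, hxt⟩ := SimplicialComplex.mem_space_iff.1 hx.1
  by_cases hzt : z ∈ convexHull ℝ (t : Set E)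
  · exact hC t ht hzt hxt
  · exact absurd hxt (Set.mem_iInter₂.1 hx.2 ⟨t, ht⟩ hzt)

lemma countable_faces [SigmaCompactSpace E]
    (hK : LocallyFinite fun s : K.faces => convexHull ℝ (s : Set E)) : K.faces.Countable :=
  Set.countable_univ_iff.1 (hK.countable_univ fun s =>
    convexHull_nonempty_iff.2 (SimplicialComplex.nonempty_of_mem_faces s.2))

lemma notMem_affineSpan_of_insert_mem_faces [DecidableEq E] {s : Finset E} {a : E} (ha : a ∉ s)
    (h : insert a s ∈ K.faces) : a ∉ affineSpan ℝ (s : Set E) := by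
  have hind := K.indep h
  have himage : (Subtype.val : ↥(insert a s) → E) '' {x | (x : E) ∈ s} = s := by
    ext y
    simp +contextual
  have hnot := hind.mem_affineSpan_iff ⟨a, s.mem_insert_self a⟩ {x | (x : E) ∈ s}
  rw [himage] at hnot
  exact fun hmem => ha (hnot.1 hmem)

lemma finrank_vectorSpan_add_one {s : Finset E} (hs : s ∈ K.faces) :
    Module.finrank ℝ (vectorSpan ℝ (s : Set E)) + 1 = s.card := by
  have hne : s.Nonempty := SimplicialComplex.nonempty_of_mem_faces hs
  have : Nonempty s := hne.to_subtype
  have hrange : Set.range (Subtype.val : s → E) = s := Subtype.range_coe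
  have hrank := (K.indep hs).finrank_vectorSpan_add_one
  rwa [hrange, Fintype.card_coe] at hrank

/-- `s` is the carrier of the point `z` of `K`: the smallest simplex of `K` containing `z`. -/
structure IsCarrier (K : SimplicialComplex ℝ E) (z : E) (s : Finset E) : Prop where
  mem_faces : s ∈ K.faces
  mem_convexHull : z ∈ convexHull ℝ (s : Set E)
  subset : ∀ t ∈ K.faces, z ∈ convexHull ℝ (t : Set E) → s ⊆ t

lemma exists_isCarrier {z : E} (hz : z ∈ K.space) : ∃ s, IsCarrier K z s := by
  obtain ⟨s, ⟨hs, hzs⟩, hmin⟩ := wellFounded_lt.has_min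
    {t | t ∈ K.faces ∧ z ∈ convexHull ℝ (t : Set E)} (SimplicialComplex.mem_space_iff.1 hz)
  refine ⟨s, hs, hzs, fun t ht hzt => ?_⟩
  have hzst := K.inter_subset_convexHull hs ht ⟨hzs, hzt⟩
  rw [← Finset.coe_inter] at hzst
  have hne : (s ∩ t).Nonempty := Finset.coe_nonempty.1 (convexHull_nonempty_iff.1 ⟨z, hzst⟩)
  have hst := hmin _ ⟨K.down_closed hs Finset.inter_subset_left hne, hzst⟩
  exact Finset.inter_eq_left.1 (Finset.inter_subset_left.eq_of_not_ssubset hst)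

lemma exists_pos_weights [DecidableEq E] {s : Finset E} {z : E}
    (hz : z ∈ convexHull ℝ (s : Set E)) (hmin : ∀ y ∈ s, z ∉ convexHull ℝ (s.erase y : Set E)) :
    ∃ w : E → ℝ, (∀ y ∈ s, 0 < w y) ∧ ∑ y ∈ s, w y = 1 ∧ ∑ y ∈ s, w y • y = z := by
  obtain ⟨w, hw, hw1, hwz⟩ := Finset.mem_convexHull'.1 hz
  refine ⟨w, fun y hy => (hw y hy).lt_of_ne fun hwy => hmin y hy ?_, hw1, hwz⟩
  refine Finset.mem_convexHull'.2 ⟨w, fun x hx => hw x (Finset.mem_of_mem_erase hx), ?_, ?_⟩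
  · rw [Finset.sum_erase s hwy.symm, hw1]
  · rw [Finset.sum_erase s (by rw [← hwy, zero_smul]), hwz]

namespace IsCarrier

variable {s : Finset E} {z : E}

lemma notMem_convexHull_erase [DecidableEq E] (hs : IsCarrier K z s) {y : E} (hy : y ∈ s) :
    z ∉ convexHull ℝ (s.erase y : Set E) := by
  intro hz
  have hne : (s.erase y).Nonempty := Finset.coe_nonempty.1 (convexHull_nonempty_iff.1 ⟨z, hz⟩)
  have hface := K.down_closed hs.mem_faces (s.erase_subset y) hne
  exact s.notMem_erase y (hs.subset _ hface hz hy)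

lemma eventually_add_mem_convexHull (hs : IsCarrier K z s) :
    ∀ᶠ v : vectorSpan ℝ (s : Set E) in 𝓝 0, z + v ∈ convexHull ℝ (s : Set E) := by
  obtain ⟨w, hw, hw1, rfl⟩ :=
    exists_pos_weights hs.mem_convexHull fun y hy => hs.notMem_convexHull_erase hy
  exact AngleDefectPaper.eventually_add_mem_convexHull hw hw1

lemma sub_notMem_vectorSpan [DecidableEq E] (hs : IsCarrier K z s) {a : E} (ha : a ∉ s)
    (hsa : insert a s ∈ K.faces) : a - z ∉ vectorSpan ℝ (s : Set E) := by
  intro h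
  rw [← direction_affineSpan, ← vsub_eq_sub, AffineSubspace.vsub_right_mem_direction_iff_mem
    (convexHull_subset_affineSpan _ hs.mem_convexHull)] at h
  exact notMem_affineSpan_of_insert_mem_faces ha hsa h

lemma isEuclideanChart_of_mem_facets (hs : IsCarrier K z s)
    (hK : LocallyFinite fun s : K.faces => convexHull ℝ (s : Set E))
    (hfacet : s ∈ K.facets) :
    IsEuclideanChart (fun v : vectorSpan ℝ (s : Set E) => z + (v : E))
      {v | z + v ∈ convexHull ℝ (s : Set E)} K.space z := by
  have : FiniteDimensional ℝ (vectorSpan ℝ (s : Set E)) :=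
    finiteDimensional_vectorSpan_of_finite ℝ s.finite_toSet
  exact isEuclideanChart_add (s.finite_toSet.isCompact_convexHull ℝ)
    (fun x hx => sub_mem_vectorSpan_of_mem_convexHull hx hs.mem_convexHull)
    hs.eventually_add_mem_convexHull (SimplicialComplex.convexHull_subset_space hs.mem_faces)
    (mem_nhdsWithin_space hK fun t ht hzt => by
      rw [hfacet.2 ht (hs.subset t ht hzt)])

lemma isEuclideanChart_of_two_cofaces [DecidableEq E] (hs : IsCarrier K z s)
    (hK : LocallyFinite fun s : K.faces => convexHull ℝ (s : Set E)) {a b : E} (ha : a ∉ s)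
    (hb : b ∉ s) (hab : a ≠ b) (hsa : insert a s ∈ K.faces) (hsb : insert b s ∈ K.faces)
    (hcofaces : ∀ t ∈ K.faces, s ⊆ t → t = s ∨ t = insert a s ∨ t = insert b s) :
    IsEuclideanChart (foldMap (vectorSpan ℝ (s : Set E)) z a b)
      (bipyramid {v | z + v ∈ convexHull ℝ (s : Set E)}) K.space z := by
  have : FiniteDimensional ℝ (vectorSpan ℝ (s : Set E)) :=
    finiteDimensional_vectorSpan_of_finite ℝ s.finite_toSet
  have hne : (s : Set E).Nonempty := convexHull_nonempty_iff.1 ⟨z, hs.mem_convexHull⟩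
  have hjoin : ∀ c, convexJoin ℝ {c} (convexHull ℝ (s : Set E)) =
      convexHull ℝ ((insert c s : Finset E) : Set E) := fun c => by
    rw [Finset.coe_insert, convexHull_insert hne]
  refine isEuclideanChart_foldMap (s.finite_toSet.isCompact_convexHull ℝ)
    (fun x hx => sub_mem_vectorSpan_of_mem_convexHull hx hs.mem_convexHull)
    hs.eventually_add_mem_convexHull (hs.sub_notMem_vectorSpan ha hsa)
    (hs.sub_notMem_vectorSpan hb hsb) ?_ ?_ ?_ <;> rw [hjoin, hjoin]
  · refine (K.inter_subset_convexHull hsa hsb).trans (convexHull_mono ?_)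
    rw [← Finset.coe_inter, Finset.coe_subset]
    grind
  · exact Set.union_subset (SimplicialComplex.convexHull_subset_space hsa)
      (SimplicialComplex.convexHull_subset_space hsb)
  · refine mem_nhdsWithin_space hK fun t ht hzt => ?_
    rcases hcofaces t ht (hs.subset t ht hzt) with rfl | rfl | rfl
    · exact Set.subset_union_of_subset_left (convexHull_mono (by simp)) _
    · exact Set.subset_union_left
    · exact Set.subset_union_right

end IsCarrier

end Complex

section Rank

variable {n : ℕ} {K : SimplicialComplex ℝ (Euc N)}

lemma exists_insert_eq_of_mem_nSimplicesOn {s σ : Finset (Euc N)} (hs : s.card = n)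
    (hσ : σ ∈ nSimplicesOn n K s) : ∃ a ∉ s, insert a s = σ := by
  obtain ⟨-, hcard, hsσ⟩ := hσ
  obtain ⟨a, ha, haσ⟩ := (Finset.covBy_iff_card_sdiff_eq_one.2 ⟨hsσ, by
    rw [Finset.card_sdiff_of_subset hsσ, hcard, hs, Nat.add_sub_cancel_left]⟩).exists_finset_insert
  exact ⟨a, ha, haσ⟩

lemma IsCarrier.exists_isEuclideanChart_of_card_eq {z : Euc N} {s : Finset (Euc N)}
    (hs : IsCarrier K z s) (hK : LocallyFinite fun s : K.faces => convexHull ℝ (s : Set (Euc N)))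
    (hdim : ∀ t ∈ K.faces, t.card ≤ n + 1) (hcard : s.card = n)
    (h2 : (nSimplicesOn n K s).ncard = 2) :
    ∃ (ψ : vectorSpan ℝ (s : Set (Euc N)) × ℝ → Euc N) (D : _), IsEuclideanChart ψ D K.space z := by
  obtain ⟨σ₁, σ₂, hne, hσ⟩ := Set.ncard_eq_two.1 h2
  have hσ₁ : σ₁ ∈ nSimplicesOn n K s := hσ ▸ Set.mem_insert σ₁ {σ₂}
  have hσ₂ : σ₂ ∈ nSimplicesOn n K s := hσ ▸ Set.mem_insert_of_mem σ₁ rfl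
  obtain ⟨a, ha, rfl⟩ := exists_insert_eq_of_mem_nSimplicesOn hcard hσ₁
  obtain ⟨b, hb, rfl⟩ := exists_insert_eq_of_mem_nSimplicesOn hcard hσ₂
  have hab : a ≠ b := fun h => hne (h ▸ rfl)
  refine ⟨_, _, hs.isEuclideanChart_of_two_cofaces hK ha hb hab hσ₁.1 hσ₂.1 fun t ht hst => ?_⟩
  rcases hst.eq_or_ssubset with rfl | hlt
  · exact Or.inl rfl
  · have htcard : t.card = n + 1 :=
      le_antisymm (hdim t ht) (hcard ▸ Finset.card_lt_card hlt)
    have htσ : t ∈ nSimplicesOn n K s := ⟨ht, htcard, hst⟩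
    exact Or.inr (hσ ▸ htσ :)

lemma exists_isEuclideanChart (hK : LocallyFinite fun s : K.faces => convexHull ℝ (s : Set (Euc N)))
    (hdim : ∀ s ∈ K.faces, s.card ≤ n + 1)
    (h2 : ∀ η ∈ K.faces, η.card = n → (nSimplicesOn n K η).ncard = 2) {z : Euc N}
    (hz : z ∈ K.space)
    (hgen : ∀ s ∈ K.faces, s.card < n → z ∉ convexHull ℝ (s : Set (Euc N))) :
    ∃ (ψ : Euc n → Euc N) (D : Set (Euc n)), IsEuclideanChart ψ D K.space z := by
  obtain ⟨s, hs⟩ := exists_isCarrier hz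
  have hrank := finrank_vectorSpan_add_one hs.mem_faces
  have hle := hdim s hs.mem_faces
  have hge : n ≤ s.card := not_lt.1 fun h => hgen s hs.mem_faces h hs.mem_convexHull
  obtain hcard | hcard : s.card = n ∨ s.card = n + 1 := by omega
  · obtain ⟨ψ, D, hψ⟩ :=
      hs.exists_isEuclideanChart_of_card_eq hK hdim hcard (h2 s hs.mem_faces hcard)
    exact ⟨_, _, hψ.comp_continuousLinearEquiv
      (ContinuousLinearEquiv.ofFinrankEq (by simp; omega))⟩
  · have hfacet : s ∈ K.facets := ⟨hs.mem_faces, fun t ht hst =>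
      Finset.eq_of_subset_of_card_le hst (hcard ▸ hdim t ht)⟩
    exact ⟨_, _, (hs.isEuclideanChart_of_mem_facets hK hfacet).comp_continuousLinearEquiv
      (ContinuousLinearEquiv.ofFinrankEq (by simp; omega))⟩

theorem csetAux_eq_empty (hn : n ≠ 0)
    (hK : LocallyFinite fun s : K.faces => convexHull ℝ (s : Set (Euc N)))
    (hdim : ∀ s ∈ K.faces, s.card ≤ n + 1)
    (h2 : ∀ η ∈ K.faces, η.card = n → (nSimplicesOn n K η).ncard = 2) {r : ℕ} (hr : r ≠ 2) :
    csetAux n K r = ∅ := by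
  refine Set.eq_empty_of_forall_notMem fun x ⟨hx, U, hU, hUS, h, hapex⟩ => hr ?_
  have hxU : x ∈ U := mem_of_mem_nhdsWithin hx hU
  obtain ⟨V, hV, hxV, hVU⟩ := mem_nhdsWithin.1 hU
  let apex : Tcone r := (h ⟨x, hxU⟩).1
  let φ : Euc (n - 1) → Euc N := fun y => h.symm (apex, y)
  have hφ : Continuous φ := by fun_prop
  have hφinj : Function.Injective φ := fun y y' hyy' =>
    (Prod.ext_iff.1 (h.symm.injective (Subtype.ext hyy'))).2
  have hφx : φ (h ⟨x, hxU⟩).2 = x := by simp [φ, apex]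
  obtain ⟨y, hyV, hy⟩ := exists_notMem_convexHull_of_countable hφ hφinj
    ((countable_faces hK).mono fun s (hs : s ∈ K.faces ∧ s.card < n) => hs.1)
    (fun s hs => by simpa using Nat.le_sub_one_of_lt hs.2) hV ⟨_, by rwa [Set.mem_preimage, hφx]⟩
  have hyU : φ y ∈ U := (h.symm (apex, y)).2
  obtain ⟨ψ, D, hψ⟩ :=
    exists_isEuclideanChart hK hdim h2 (hUS hyU) fun s hs hcard => hy s ⟨hs, hcard⟩
  refine hψ.eq_two_of_homeomorph (F' := Euc (n - 1)) (by simp; omega)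
    (mem_nhdsWithin.2 ⟨V, hV, hyV, hVU⟩) hUS hyU h ?_
  simpa [φ, apex] using hapex hxU

lemma openSimplex_nonempty {s : Finset (Euc N)} (hs : s.Nonempty) : (openSimplex s).Nonempty :=
  (convexHull_nonempty_iff.2 hs).intrinsicInterior (convex_convexHull ℝ _)

theorem strRank_eq_one_general (hn : n ≠ 0)
    (hK : LocallyFinite fun s : K.faces => convexHull ℝ (s : Set (Euc N)))
    (hdim : ∀ s ∈ K.faces, s.card ≤ n + 1)
    (h2 : ∀ η ∈ K.faces, η.card = n → (nSimplicesOn n K η).ncard = 2) {τ : Finset (Euc N)}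
    (hτ : τ ∈ K.faces) : strRank n K τ = 1 := by
  obtain ⟨x, hx⟩ := openSimplex_nonempty (SimplicialComplex.nonempty_of_mem_faces hτ)
  refine dif_neg ?_
  rintro ⟨r, hr, hsub⟩
  simpa [csetAux_eq_empty hn hK hdim h2 hr] using hsub hx

end Rank

/-- If `K` is a finite `n`-dimensional simplicial complex (`n ≥ 2`) in which
every `(n-1)`-simplex is a face of precisely two `n`-simplices, then the
stratification rank of every simplex of dimension `p ≤ n - 2` equals `1`. -/
theorem strRank_eq_one {N n : ℕ} (hn : 2 ≤ n) (K : SimplicialComplex ℝ (Euc N))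
    (hfin : K.faces.Finite) (hdim : IsNDim n K)
    (h2 : ∀ η ∈ K.faces, η.card = n → (nSimplicesOn n K η).ncard = 2) :
    ∀ τ ∈ K.faces, ∀ p : ℕ, τ.card = p + 1 → p ≤ n - 2 → strRank n K τ = 1 := by
  have : Finite K.faces := hfin
  exact fun τ hτ _ _ _ =>
    strRank_eq_one_general (by omega) (locallyFinite_of_finite _) hdim.1 h2 hτ

end AngleDefectPaper
end
end

section
/- Let K be a finite n-dimensional simplicial complex, with n ≥ 2, and suppose that each (n−1)-simplex of K is a face of precisely two n-simplices of K. Then for every p-simplex τ^p of K with 0 ≤ p ≤ n−2, one has 2·f_{n−p−2}(link(τ^p, K)) = (n−p)·f_{n−p−1}(link(τ^p, K)). -/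
/-!
Count the pairs of a `k`-simplex `ω` and an `l`-simplex `σ` of the link of `τ` with `ω ⊆ σ`.
Each `σ` has `(l + 1).choose (k + 1)` faces of dimension `k`, all of them in the link. The
simplices of the link containing `ω` correspond under `σ ↦ τ ∪ σ` to the simplices of `K`
containing `τ ∪ ω`, so the hypothesis on `K` says how many `l`-simplices contain a given `ω`.
-/

open Filter MeasureTheory Geometry
open scoped BigOperators

noncomputable section

attribute [local instance 0] Classical.propDecidable

namespace AngleDefectPaper

variable {N : ℕ}

section DoubleCounting

open Finset

variable {α : Type*} [DecidableEq α]

theorem card_mul_eq_card_mul_choose {𝒜 ℬ : Finset (Finset α)} {m n r : ℕ}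
    (h𝒜 : (𝒜 : Set (Finset α)).Sized m) (hℬ : (ℬ : Set (Finset α)).Sized n)
    (hsub : ∀ b ∈ ℬ, powersetCard m b ⊆ 𝒜) (hdeg : ∀ a ∈ 𝒜, #{b ∈ ℬ | a ⊆ b} = r) :
    #𝒜 * r = #ℬ * n.choose m := by
  refine card_mul_eq_card_mul (fun a b : Finset α => a ⊆ b) hdeg fun b hb => ?_
  have hbelow : 𝒜.bipartiteBelow (fun a b : Finset α => a ⊆ b) b = powersetCard m b := by
    ext a
    rw [mem_bipartiteBelow, mem_powersetCard]
    exact ⟨fun ⟨ha, hab⟩ => ⟨hab, h𝒜 ha⟩,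
      fun hab => ⟨hsub b hb (mem_powersetCard.2 hab), hab.1⟩⟩
  rw [hbelow, card_powersetCard, hℬ hb]

end DoubleCounting

section AbstractComplex

open Finset

variable {α : Type*}

/-- The number `f_k(L)` of `k`-simplices of an abstract simplicial complex `L`; it is `0` when there
are infinitely many. -/
def faceCount (L : PreAbstractSimplicialComplex α) (k : ℕ) : ℕ :=
  {s ∈ L.faces | #s = k + 1}.ncard

/-- The `l`-simplices of an abstract simplicial complex `L` that have `η` as a face; `η` itself may
be any finite set of vertices, including the empty one. -/
def cofaces (L : PreAbstractSimplicialComplex α) (l : ℕ) (η : Finset α) : Set (Finset α) :=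
  {σ | σ ∈ L.faces ∧ #σ = l + 1 ∧ η ⊆ σ}

theorem mul_faceCount_eq_choose_mul_faceCount {L : PreAbstractSimplicialComplex α}
    (hfin : L.faces.Finite) {k l r : ℕ}
    (hdeg : ∀ ω ∈ L.faces, #ω = k + 1 → (cofaces L l ω).ncard = r) :
    r * faceCount L k = (l + 1).choose (k + 1) * faceCount L l := by
  have faceCount_eq_card_slice (i : ℕ) : faceCount L i = #(hfin.toFinset # (i + 1)) := by
    rw [faceCount, ← Set.ncard_coe_finset]
    congr 1
    ext s
    simp [mem_slice]
  rw [faceCount_eq_card_slice, faceCount_eq_card_slice, mul_comm r, mul_comm (Nat.choose _ _)]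
  refine card_mul_eq_card_mul_choose sized_slice sized_slice (fun σ hσ ω hω => ?_) fun ω hω => ?_
  · rw [mem_slice, hfin.mem_toFinset] at hσ ⊢
    obtain ⟨hωσ, hcard⟩ := mem_powersetCard.1 hω
    exact ⟨(L.isRelLowerSet_faces hσ.1).2 hωσ (card_pos.1 (by omega)), hcard⟩
  · rw [mem_slice, hfin.mem_toFinset] at hω
    rw [← hdeg ω hω.1 hω.2, ← Set.ncard_coe_finset]
    congr 1
    ext σ
    simp [mem_slice, cofaces, and_assoc]

variable [DecidableEq α]

/-- The link of `τ` in an abstract simplicial complex `K`, as a complex on the same vertex type;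
the link of `∅` is `K`. -/
def link (K : PreAbstractSimplicialComplex α) (τ : Finset α) : PreAbstractSimplicialComplex α where
  faces := {ω | ω ∈ K.faces ∧ Disjoint τ ω ∧ τ ∪ ω ∈ K.faces}
  isRelLowerSet_faces := fun _ ⟨hω, hdisj, hunion⟩ =>
    ⟨(K.isRelLowerSet_faces hω).1, fun _ hsub hne =>
      ⟨(K.isRelLowerSet_faces hω).2 hsub hne, hdisj.mono_right hsub,
        (K.isRelLowerSet_faces hunion).2 (union_subset_union_right hsub)
          (hne.mono subset_union_right)⟩⟩

theorem bijOn_union_cofaces_link (K : PreAbstractSimplicialComplex α) {τ ω : Finset α}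
    (hdisj : Disjoint τ ω) (l : ℕ) :
    Set.BijOn (τ ∪ ·) (cofaces (link K τ) l ω) (cofaces K (l + #τ) (τ ∪ ω)) := by
  refine Set.InvOn.bijOn (f' := (· \ τ)) ⟨?_, ?_⟩ ?_ ?_
  · rintro σ ⟨⟨-, hτσ, -⟩, -⟩
    exact union_sdiff_cancel_left hτσ
  · rintro σ ⟨-, -, hsub⟩
    exact union_sdiff_of_subset (subset_union_left.trans hsub)
  · rintro σ ⟨⟨-, hτσ, hunion⟩, hcard, hωσ⟩
    exact ⟨hunion, by rw [card_union_of_disjoint hτσ]; omega, union_subset_union_right hωσ⟩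
  · rintro σ ⟨hσ, hcard, hsub⟩
    obtain ⟨hτσ, hωσ⟩ := union_subset_iff.1 hsub
    have hcard_sdiff : #(σ \ τ) = l + 1 := by rw [card_sdiff_of_subset hτσ]; omega
    have hne : (σ \ τ).Nonempty := card_pos.1 (by omega)
    have hunion : τ ∪ σ \ τ ∈ K.faces := by rwa [union_sdiff_of_subset hτσ]
    exact ⟨⟨(K.isRelLowerSet_faces hσ).2 sdiff_subset hne, disjoint_sdiff, hunion⟩,
      hcard_sdiff, subset_sdiff.2 ⟨hωσ, hdisj.symm⟩⟩

theorem link_face_count_general (K : PreAbstractSimplicialComplex α) {τ : Finset α}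
    (hfin : (link K τ).faces.Finite) {k l r : ℕ}
    (hdeg : ∀ η ∈ K.faces, τ ⊆ η → #η = k + #τ + 1 → (cofaces K (l + #τ) η).ncard = r) :
    r * faceCount (link K τ) k = (l + 1).choose (k + 1) * faceCount (link K τ) l := by
  refine mul_faceCount_eq_choose_mul_faceCount hfin fun ω ⟨_, hdisj, hunion⟩ hcard => ?_
  rw [(bijOn_union_cofaces_link K hdisj l).ncard_eq]
  refine hdeg _ hunion subset_union_left ?_
  rw [card_union_of_disjoint hdisj]
  omega

end AbstractComplex

/-- If `K` is a finite `n`-dimensional simplicial complex (`n ≥ 2`) in which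
every `(n-1)`-simplex is a face of precisely two `n`-simplices, then for every
`p`-simplex `τ` of `K` with `p ≤ n - 2` one has
`2 f_{n-p-2}(link(τ, K)) = (n - p) f_{n-p-1}(link(τ, K))`. -/
theorem link_face_count {N n : ℕ} (hn : 2 ≤ n) (K : SimplicialComplex ℝ (Euc N))
    (hfin : K.faces.Finite) (hdim : IsNDim n K)
    (h2 : ∀ η ∈ K.faces, η.card = n → (nSimplicesOn n K η).ncard = 2) :
    ∀ τ ∈ K.faces, ∀ p : ℕ, τ.card = p + 1 → p ≤ n - 2 →
      2 * fcount (linkFaces K τ) (n - p - 2) =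
        (n - p) * fcount (linkFaces K τ) (n - p - 1) := by
  intro τ _ p hp hpn
  obtain ⟨k, rfl⟩ : ∃ k, n = k + 1 + (p + 1) := ⟨n - p - 2, by omega⟩
  have hcount := link_face_count_general K.toPreAbstractSimplicialComplex (τ := τ) (k := k)
    (l := k + 1) (r := 2) (hfin.subset fun _ hω => hω.1)
    fun η hη _ hcard => hp ▸ h2 η hη (by omega)
  rw [Nat.choose_succ_self_right] at hcount
  rwa [show k + 1 + (p + 1) - p = k + 1 + 1 by omega]

end AngleDefectPaper
end
end

section
/- Let n be an odd integer with n ≥ 3, let σ^n be an n-simplex in Euclidean space, and let τ^p be a p-face of σ^n, where p is an even integer with 0 ≤ p ≤ n−2. Then α(τ^p, σ^n) − (1/2)·Σ_{i=p+1}^{n−2} (−1)^{i+1} Σ_{σ^n ≻ η^i ≻ τ^p} α(η^i, σ^n) = 1/2 − (n−p)/4, where the inner sum is over all i-faces η^i of σ^n that have τ^p as a face. -/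
open Filter MeasureTheory Geometry
open scoped BigOperators

noncomputable section

attribute [local instance 0] Classical.propDecidable

namespace AngleDefectPaper

variable {N : ℕ}

/-!
Near the centroid of a face `η`, the simplex `σ` (thickened orthogonally to its span) is the cone
cut out by the linear parts of the barycentric coordinates of the vertices outside `η`, so
`α(η, σ)` is the probability that a random point `y` of the unit ball satisfies the corresponding
inequalities `0 ≤ L u y`. Replacing `y` by `-y` turns these inequalities into their negations, up to
a null set, and inclusion-exclusion gives the Gram-Euler relation
`α(τ, σ) = ∑_{τ ⊆ η ⊆ σ} (-1)^(dim σ - dim η) α(η, σ)`.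
In odd codimension the term `η = τ` moves to the left-hand side with coefficient `2`; the facets
contribute `1 / 2` each and `σ` itself contributes `1`.
-/

open Finset ProbabilityTheory
open scoped Pointwise Topology

variable {ι E : Type*}

section FinsetInterval

variable [DecidableEq ι] {s t : Finset ι}

lemma sum_powerset_sdiff_eq_sum_Icc {M : Type*} [AddCommMonoid M] (hst : s ⊆ t)
    (g : Finset ι → M) : ∑ u ∈ (t \ s).powerset, g u = ∑ u ∈ Icc s t, g (t \ u) := by
  have hinv : ∀ u ∈ (t \ s).powerset, t \ (t \ u) = u := fun u hu =>
    Finset.sdiff_sdiff_eq_self ((mem_powerset.1 hu).trans sdiff_subset)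
  refine sum_bij' (fun u _ => t \ u) (fun u _ => t \ u) ?_ ?_ hinv ?_ fun u hu => ?_
  · grind
  · grind
  · exact fun u hu => Finset.sdiff_sdiff_eq_self (mem_Icc.1 hu).2
  · rw [hinv u hu]

lemma filter_Icc_card_eq_image_erase {n : ℕ} (hst : s ⊆ t) (ht : #t = n + 1) :
    {u ∈ Icc s t | #u = n} = (t \ s).image t.erase := by
  ext u
  simp only [mem_filter, mem_Icc, mem_image]
  constructor
  · rintro ⟨⟨hsu, hut⟩, hu⟩
    have hcovBy : u ⋖ t :=
      covBy_iff_card_sdiff_eq_one.2 ⟨hut, by rw [card_sdiff_of_subset hut]; omega⟩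
    obtain ⟨a, ha, rfl⟩ := covBy_iff_exists_erase.1 hcovBy
    exact ⟨a, Finset.mem_sdiff.2 ⟨ha, fun has => notMem_erase a t (hsu has)⟩, rfl⟩
  · rintro ⟨a, ha, rfl⟩
    obtain ⟨hat, has⟩ := Finset.mem_sdiff.1 ha
    have hcard : #(t.erase a) = n := by rw [card_erase_of_mem hat, ht, Nat.add_sub_cancel]
    exact ⟨⟨subset_erase.2 ⟨hst, has⟩, erase_subset a t⟩, hcard⟩

end FinsetInterval

section InclusionExclusion

lemma measureReal_biInter_compl_eq_sum_powerset [MeasurableSpace E] (μ : Measure E)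
    [IsFiniteMeasure μ] {t : Finset ι} {s : ι → Set E} (hs : ∀ i ∈ t, MeasurableSet (s i)) :
    μ.real (⋂ i ∈ t, (s i)ᶜ) = ∑ u ∈ t.powerset, (-1) ^ #u * μ.real (⋂ i ∈ u, s i) := by
  have hempty : {u ∈ t.powerset | ¬ u.Nonempty} = {∅} := by
    ext u; simp +contextual
  rw [← sum_filter_add_sum_filter_not _ (·.Nonempty), hempty, ← Set.compl_iUnion₂,
    measureReal_compl (t.measurableSet_biUnion hs), measureReal_biUnion_eq_sum_powerset hs]
  simp [pow_succ, sub_eq_neg_add]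

end InclusionExclusion

section HalfspaceCone

variable [NormedAddCommGroup E] [NormedSpace ℝ E]

/-- The closed polyhedral cone of the points at which all the linear forms `L i`, `i ∈ J`, are
nonnegative. The solid angle of a simplex along a face is the angle of such a cone. -/
def halfspaceCone (L : ι → E →ₗ[ℝ] ℝ) (J : Finset ι) : Set E :=
  ⋂ i ∈ J, {y | 0 ≤ L i y}

lemma mem_halfspaceCone {L : ι → E →ₗ[ℝ] ℝ} {J : Finset ι} {y : E} :
    y ∈ halfspaceCone L J ↔ ∀ i ∈ J, 0 ≤ L i y := by
  simp [halfspaceCone]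

lemma smul_halfspaceCone (L : ι → E →ₗ[ℝ] ℝ) (J : Finset ι) {r : ℝ} (hr : 0 < r) :
    r • halfspaceCone L J = halfspaceCone L J := by
  ext y
  simp [Set.mem_smul_set_iff_inv_smul_mem₀ hr.ne', mem_halfspaceCone, hr]

variable [FiniteDimensional ℝ E]

lemma eventuallyEq_vadd_halfspaceCone (f : ι → E →ᵃ[ℝ] ℝ) (J : Finset ι) {x : E}
    (hx : ∀ i ∈ J, 0 ≤ f i x) :
    (⋂ i ∈ J, {y | 0 ≤ f i y} : Set E) =ᶠ[𝓝 x]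
      (x +ᵥ halfspaceCone (fun i => (f i).linear) {i ∈ J | f i x = 0} : Set E) := by
  have hpos : ∀ᶠ y in 𝓝 x, ∀ i ∈ J, f i x ≠ 0 → 0 ≤ f i y := by
    refine (eventually_all_finset J).2 fun i hi => eventually_imp_distrib_left.2 fun hne => ?_
    have hcont : ContinuousAt (f i) x := (f i).continuous_of_finiteDimensional.continuousAt
    exact (hcont.eventually_const_lt ((hx i hi).lt_of_ne' hne)).mono fun _ => le_of_lt
  refine eventuallyEq_set.2 ?_
  filter_upwards [hpos] with y hy
  have hlinear (i : ι) (hi : f i x = 0) : (f i).linear (-x +ᵥ y) = f i y := by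
    have := (f i).linearMap_vsub y x
    simpa [hi, neg_add_eq_sub] using this
  simp only [Set.mem_vadd_set_iff_neg_vadd_mem, mem_halfspaceCone, mem_filter, Set.mem_iInter,
    Set.mem_ofPred_eq]
  constructor
  · rintro h i ⟨hi, hi0⟩
    exact (hlinear i hi0).symm ▸ h i hi
  · intro h i hi
    by_cases hi0 : f i x = 0
    · exact hlinear i hi0 ▸ h i ⟨hi, hi0⟩
    · exact hy i hi hi0

variable [MeasurableSpace E] [BorelSpace E]

theorem measureReal_halfspaceCone_eq_sum_powerset (μ : Measure E) [IsFiniteMeasure μ]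
    [μ.IsNegInvariant] (L : ι → E →ₗ[ℝ] ℝ) (J : Finset ι)
    (hL : ∀ i ∈ J, μ (LinearMap.ker (L i)) = 0) :
    μ.real (halfspaceCone L J) = ∑ K ∈ J.powerset, (-1) ^ #K * μ.real (halfspaceCone L K) := by
  have hmeas (i : ι) : MeasurableSet {y | 0 ≤ L i y} :=
    (isClosed_le continuous_const (L i).continuous_of_finiteDimensional).measurableSet
  have hne : ∀ᵐ y ∂μ, ∀ i ∈ J, L i y ≠ 0 :=
    (eventually_all_finset J).2 fun i hi => measure_eq_zero_iff_ae_notMem.1 (hL i hi)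
  have hneg : -halfspaceCone L J =ᵐ[μ] (⋂ i ∈ J, {y | 0 ≤ L i y}ᶜ : Set E) := by
    refine eventuallyEq_set.2 ?_
    filter_upwards [hne] with y hy
    simp only [Set.mem_neg, mem_halfspaceCone, map_neg, Left.nonneg_neg_iff, Set.mem_iInter,
      Set.mem_compl_iff, Set.mem_ofPred_eq, not_le]
    exact forall₂_congr fun i hi => (hy i hi).le_iff_lt
  calc
    μ.real (halfspaceCone L J) = μ.real (-halfspaceCone L J) := by
      simp only [Measure.real, Measure.measure_neg]
    _ = μ.real (⋂ i ∈ J, {y | 0 ≤ L i y}ᶜ) := measureReal_congr hneg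
    _ = _ := measureReal_biInter_compl_eq_sum_powerset μ fun i _ => hmeas i

end HalfspaceCone

section LocalAngle

variable [NormedAddCommGroup E] [NormedSpace ℝ E] [FiniteDimensional ℝ E] [MeasurableSpace E]
  [BorelSpace E] (μ : Measure E) [μ.IsAddHaarMeasure]

instance isProbabilityMeasure_cond_unitBall : IsProbabilityMeasure μ[|Metric.ball (0 : E) 1] :=
  cond_isProbabilityMeasure_of_finite (Metric.measure_ball_pos μ 0 one_pos).ne'
    measure_ball_lt_top.ne

instance isNegInvariant_cond_unitBall : μ[|Metric.ball (0 : E) 1].IsNegInvariant where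
  neg_eq_self := by
    ext s _
    rw [Measure.neg_apply, cond_apply measurableSet_ball, cond_apply measurableSet_ball,
      ← Measure.measure_neg μ (_ ∩ s), Set.inter_neg, neg_ball, neg_zero]

lemma measureReal_ball_inter_vadd {C : Set E} (hC : ∀ r : ℝ, 0 < r → r • C = C) (x : E) {r : ℝ}
    (hr : 0 < r) :
    μ.real (Metric.ball x r ∩ (x +ᵥ C)) =
      r ^ Module.finrank ℝ E * μ.real (Metric.ball 0 1 ∩ C) := by
  have hscale : Metric.ball x r ∩ (x +ᵥ C) = x +ᵥ r • (Metric.ball 0 1 ∩ C) := by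
    rw [Set.smul_set_inter₀ hr.ne', smul_unitBall_of_pos hr, hC r hr, Set.vadd_set_inter,
      Metric.vadd_ball, vadd_eq_add, add_zero]
  rw [hscale, Measure.real, measure_vadd, Measure.addHaar_smul_of_nonneg μ hr.le,
    ENNReal.toReal_mul, ENNReal.toReal_ofReal (by positivity), Measure.real]

lemma tendsto_measureReal_ball_inter_div {C S : Set E} (hC : ∀ r : ℝ, 0 < r → r • C = C) {x : E}
    (hS : S =ᶠ[𝓝 x] (x +ᵥ C : Set E)) :
    Tendsto (fun r => μ.real (Metric.ball x r ∩ S) / μ.real (Metric.ball x r)) (𝓝[>] 0)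
      (𝓝 (μ[|Metric.ball (0 : E) 1].real C)) := by
  obtain ⟨δ, hδ, hball⟩ := Metric.eventually_nhds_iff_ball.1 hS.mem_iff
  refine tendsto_const_nhds.congr' ?_
  filter_upwards [Ioo_mem_nhdsGT hδ] with r ⟨hr, hrδ⟩
  have hinter : Metric.ball x r ∩ S = Metric.ball x r ∩ (x +ᵥ C) := by
    ext y
    exact and_congr_right fun hy => hball y (Metric.ball_subset_ball hrδ.le hy)
  have hvol : μ.real (Metric.ball x r) =
      r ^ Module.finrank ℝ E * μ.real (Metric.ball (0 : E) 1) := by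
    simpa using measureReal_ball_inter_vadd μ (C := Set.univ)
      (fun r hr => Set.smul_set_univ₀ hr.ne') x hr
  rw [hinter, measureReal_ball_inter_vadd μ hC x hr, hvol,
    mul_div_mul_left _ _ (pow_pos hr _).ne', measureReal_def, cond_apply measurableSet_ball,
    ENNReal.toReal_mul, ENNReal.toReal_inv, inv_mul_eq_div, measureReal_def, measureReal_def]

end LocalAngle

section CylindricalCoordinates

variable [NormedAddCommGroup E] [InnerProductSpace ℝ E]

/-- The convex hull of `s` thickened in the directions orthogonal to the affine span of `s`; this
is the set whose density `solidAngle` measures. -/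
def normalCylinder (s : Set E) : Set E :=
  {y | ∃ c ∈ convexHull ℝ s, ∃ w ∈ (vectorSpan ℝ s)ᗮ, y = c + w}

/-- The affine functions `f u`, `u ∈ σ`, are the barycentric coordinates of the simplex with vertex
set `σ`, extended to the whole space so as to be constant in the directions orthogonal to `σ`. -/
structure IsCylindricalCoordinates (σ : Finset E) (f : E → E →ᵃ[ℝ] ℝ) : Prop where
  apply_self : ∀ u ∈ σ, f u u = 1
  apply_of_ne : ∀ u ∈ σ, ∀ v ∈ σ, u ≠ v → f u v = 0
  linear_apply_orthogonal : ∀ u ∈ σ, ∀ w ∈ (vectorSpan ℝ (σ : Set E))ᗮ, (f u).linear w = 0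

lemma exists_isCylindricalCoordinates {σ : Finset E}
    (hind : AffineIndependent ℝ ((↑) : σ → E)) : ∃ f, IsCylindricalCoordinates σ f := by
  rcases σ.eq_empty_or_nonempty with rfl | hne
  · exact ⟨0, by constructor <;> simp⟩
  let S := affineSpan ℝ (σ : Set E)
  have : Nonempty S := (hne.to_set.affineSpan ℝ).to_subtype
  have : FiniteDimensional ℝ S.direction :=
    finiteDimensional_direction_affineSpan_of_finite ℝ σ.finite_toSet
  let vertex (u : σ) : S := ⟨u, subset_affineSpan ℝ _ u.2⟩
  have hrange : Set.range vertex = (↑) ⁻¹' (σ : Set E) := by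
    ext x
    exact ⟨by rintro ⟨u, rfl⟩; exact u.2, fun hx => ⟨⟨x, hx⟩, rfl⟩⟩
  have : Nonempty (σ : Set E) := hne.to_set.to_subtype
  let b : AffineBasis σ ℝ S :=
    ⟨vertex, AffineIndependent.of_comp S.subtype hind, by
      rw [hrange]; exact affineSpan_coe_preimage_eq_top _⟩
  let π : E →ᵃ[ℝ] S := EuclideanGeometry.orthogonalProjection S
  have hπ (v : σ) : π v = b v :=
    EuclideanGeometry.orthogonalProjection_mem_subspace_eq_self (b v)
  refine ⟨fun u => if hu : u ∈ σ then (b.coord ⟨u, hu⟩).comp π else 0, ?_, ?_, ?_⟩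
  · intro u hu
    simp [hu, hπ ⟨u, hu⟩]
  · intro u hu v hv huv
    simp [hu, hπ ⟨v, hv⟩, b.coord_apply_ne (i := ⟨u, hu⟩) (j := ⟨v, hv⟩) (by simpa using huv)]
  · intro u hu w hw
    have hlinear : π.linear w = 0 :=
      Submodule.orthogonalProjectionOnto_eq_zero_iff.2 (by rwa [direction_affineSpan])
    simp [hu, hlinear]

namespace IsCylindricalCoordinates

variable {σ : Finset E} {f : E → E →ᵃ[ℝ] ℝ}

lemma linear_ne_zero (hf : IsCylindricalCoordinates σ f) {u v : E} (hu : u ∈ σ) (hv : v ∈ σ)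
    (huv : u ≠ v) : (f u).linear ≠ 0 := by
  intro h
  have := (f u).linearMap_vsub u v
  simp [h, hf.apply_self u hu, hf.apply_of_ne u hu v hv huv] at this

lemma apply_affineCombination (hf : IsCylindricalCoordinates σ f) {η : Finset E} (hη : η ⊆ σ)
    {w : E → ℝ} (hw : ∑ v ∈ η, w v = 1) {u : E} (hu : u ∈ σ) :
    f u (η.affineCombination ℝ id w) = if u ∈ η then w u else 0 := by
  have hterm : ∀ v ∈ η, w v * f u v = if u = v then w v else 0 := fun v hv => by
    split_ifs with huv
    · rw [← huv, hf.apply_self u hu, mul_one]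
    · rw [hf.apply_of_ne u hu v (hη hv) huv, mul_zero]
  rw [map_affineCombination _ _ _ hw, affineCombination_eq_linear_combination _ _ _ hw,
    ← sum_ite_eq η u w, ← sum_congr rfl hterm]
  rfl

lemma apply_centroid (hf : IsCylindricalCoordinates σ f) {η : Finset E} (hη : η ⊆ σ)
    (hne : η.Nonempty) {u : E} (hu : u ∈ σ) :
    f u (η.centroid ℝ id) = if u ∈ η then (#η : ℝ)⁻¹ else 0 := by
  rw [centroid_def,
    hf.apply_affineCombination hη (η.sum_centroidWeights_eq_one_of_nonempty ℝ hne) hu,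
    centroidWeights_apply]

lemma apply_add_orthogonal (hf : IsCylindricalCoordinates σ f) {u : E} (hu : u ∈ σ) (c : E)
    {w : E} (hw : w ∈ (vectorSpan ℝ (σ : Set E))ᗮ) : f u (c + w) = f u c := by
  rw [add_comm, ← vadd_eq_add, AffineMap.map_vadd, hf.linear_apply_orthogonal u hu w hw, zero_vadd]

lemma mem_convexHull_iff (hf : IsCylindricalCoordinates σ f) {c : E}
    (hc : c ∈ affineSpan ℝ (σ : Set E)) :
    c ∈ convexHull ℝ (σ : Set E) ↔ ∀ u ∈ σ, 0 ≤ f u c := by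
  constructor
  · intro hc u hu
    refine convexHull_min (fun v hv => ?_) ((convex_Ici 0).affine_preimage (f u)) hc
    change 0 ≤ f u v
    by_cases huv : u = v
    · exact huv ▸ (hf.apply_self u hu).symm ▸ zero_le_one
    · exact (hf.apply_of_ne u hu v hv huv).ge
  · intro hpos
    obtain ⟨η, w, hησ, hw, rfl⟩ :=
      eq_affineCombination_of_mem_affineSpan_image (p := id) (by simpa using hc)
    have hw_nonneg : ∀ u ∈ η, 0 ≤ w u := fun u hu => by
      simpa [hf.apply_affineCombination hησ hw (hησ hu), hu] using hpos u (hησ hu)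
    rw [affineCombination_eq_centerMass hw]
    exact η.centerMass_mem_convexHull hw_nonneg (hw.symm ▸ one_pos) fun u hu => hησ hu

lemma normalCylinder_eq (hf : IsCylindricalCoordinates σ f) (hne : σ.Nonempty) :
    normalCylinder (σ : Set E) = ⋂ u ∈ σ, {y | 0 ≤ f u y} := by
  ext y
  simp only [Set.mem_iInter, Set.mem_ofPred_eq]
  constructor
  · rintro ⟨c, hc, w, hw, rfl⟩ u hu
    rw [hf.apply_add_orthogonal hu c hw]
    exact (hf.mem_convexHull_iff (convexHull_subset_affineSpan _ hc)).1 hc u hu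
  · intro hy
    let S := affineSpan ℝ (σ : Set E)
    have : Nonempty S := (hne.to_set.affineSpan ℝ).to_subtype
    have : FiniteDimensional ℝ S.direction :=
      finiteDimensional_direction_affineSpan_of_finite ℝ σ.finite_toSet
    let c := EuclideanGeometry.orthogonalProjection S y
    have hw : y - c ∈ (vectorSpan ℝ (σ : Set E))ᗮ := by
      rw [← direction_affineSpan]
      exact EuclideanGeometry.vsub_orthogonalProjection_mem_direction_orthogonal S y
    refine ⟨c, (hf.mem_convexHull_iff c.2).2 fun u hu => ?_, y - c, hw, (add_sub_cancel _ _).symm⟩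
    rw [← hf.apply_add_orthogonal hu c hw, add_sub_cancel]
    exact hy u hu

end IsCylindricalCoordinates

end CylindricalCoordinates

section SolidAngle

lemma solidAngle_eq_measureReal_halfspaceCone {σ : Finset (Euc N)} {f : Euc N → Euc N →ᵃ[ℝ] ℝ}
    (hf : IsCylindricalCoordinates σ f) {η : Finset (Euc N)} (hησ : η ⊆ σ) (hη : η.Nonempty) :
    solidAngle η σ =
      (volume[|Metric.ball (0 : Euc N) 1]).real
        (halfspaceCone (fun u => (f u).linear) (σ \ η)) := by
  have hcentroid (u) (hu : u ∈ σ) := hf.apply_centroid hησ hη hu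
  have hnonneg : ∀ u ∈ σ, 0 ≤ f u (η.centroid ℝ id) := fun u hu => by
    rw [hcentroid u hu]; positivity
  have hactive : {u ∈ σ | f u (η.centroid ℝ id) = 0} = σ \ η := by
    ext u
    simp +contextual [hcentroid, hη.ne_empty]
  have hlocal := eventuallyEq_vadd_halfspaceCone f σ hnonneg
  rw [← hf.normalCylinder_eq (hη.mono hησ), hactive] at hlocal
  exact (tendsto_measureReal_ball_inter_div volume
    (fun r hr => smul_halfspaceCone _ _ hr) hlocal).limUnder_eq

theorem solidAngle_eq_sum_Icc {σ τ : Finset (Euc N)}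
    (hind : AffineIndependent ℝ ((↑) : σ → Euc N)) (hτσ : τ ⊆ σ) (hτ : τ.Nonempty) :
    solidAngle τ σ = ∑ η ∈ Icc τ σ, (-1) ^ #(σ \ η) * solidAngle η σ := by
  obtain ⟨f, hf⟩ := exists_isCylindricalCoordinates hind
  have hnull : ∀ u ∈ σ \ τ,
      volume[|Metric.ball (0 : Euc N) 1] (LinearMap.ker (f u).linear) = 0 := fun u hu => by
    obtain ⟨v, hv⟩ := hτ
    obtain ⟨huσ, huτ⟩ := mem_sdiff.1 hu
    have hlinear := hf.linear_ne_zero huσ (hτσ hv) (ne_of_mem_of_not_mem hv huτ).symm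
    exact cond_absolutelyContinuous
      (Measure.addHaar_submodule volume _ (LinearMap.ker_eq_top.not.2 hlinear))
  rw [solidAngle_eq_measureReal_halfspaceCone hf hτσ hτ,
    measureReal_halfspaceCone_eq_sum_powerset _ _ _ hnull, sum_powerset_sdiff_eq_sum_Icc hτσ]
  refine sum_congr rfl fun η hη => ?_
  obtain ⟨hτη, hησ⟩ := mem_Icc.1 hη
  rw [solidAngle_eq_measureReal_halfspaceCone hf hησ (hτ.mono hτη)]

lemma solidAngle_self {σ : Finset (Euc N)} (hind : AffineIndependent ℝ ((↑) : σ → Euc N))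
    (hσ : σ.Nonempty) : solidAngle σ σ = 1 := by
  obtain ⟨f, hf⟩ := exists_isCylindricalCoordinates hind
  simp [solidAngle_eq_measureReal_halfspaceCone hf subset_rfl hσ, halfspaceCone]

lemma solidAngle_of_covBy {σ η : Finset (Euc N)} (hind : AffineIndependent ℝ ((↑) : σ → Euc N))
    (hη : η.Nonempty) (hησ : η ⋖ σ) : solidAngle η σ = 1 / 2 := by
  have hsub : η ⊆ σ := hησ.le
  have hIcc : Icc η σ = {η, σ} := by
    rw [← coe_inj, coe_Icc, hησ.Icc_eq, coe_pair]
  have h := solidAngle_eq_sum_Icc hind hsub hη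
  rw [hIcc, sum_pair hησ.ne, (covBy_iff_card_sdiff_eq_one.1 hησ).2, _root_.sdiff_self,
    bot_eq_empty, card_empty, solidAngle_self hind (hη.mono hsub)] at h
  linarith

end SolidAngle

section FaceAngleSum

/-- The sum of the solid angles of `σ` along its `i`-dimensional faces that contain `τ`. -/
def faceAngleSum (τ σ : Finset (Euc N)) (i : ℕ) : ℝ :=
  ∑ᶠ η ∈ {η : Finset (Euc N) | η ⊆ σ ∧ #η = i + 1 ∧ τ ⊆ η}, solidAngle η σ

variable {n p : ℕ} {σ τ : Finset (Euc N)}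

lemma faceAngleSum_eq_sum (τ σ : Finset (Euc N)) (i : ℕ) :
    faceAngleSum τ σ i = ∑ η ∈ Icc τ σ with #η = i + 1, solidAngle η σ := by
  have hfaces : {η : Finset (Euc N) | η ⊆ σ ∧ #η = i + 1 ∧ τ ⊆ η} =
      ({η ∈ Icc τ σ | #η = i + 1} : Finset _) := by
    ext η
    simp only [Set.mem_ofPred_eq, mem_coe, mem_filter, mem_Icc]
    tauto
  rw [faceAngleSum, hfaces, finsum_mem_coe_finset]

lemma faceAngleSum_dim_left (hτσ : τ ⊆ σ) (hτ : #τ = p + 1) :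
    faceAngleSum τ σ p = solidAngle τ σ := by
  have hface : {η ∈ Icc τ σ | #η = p + 1} = {τ} := by
    ext η
    simp only [mem_filter, mem_Icc, mem_singleton]
    refine ⟨fun ⟨⟨hτη, _⟩, hη⟩ => (eq_of_subset_of_card_le hτη (hη.trans hτ.symm).le).symm, ?_⟩
    rintro rfl
    exact ⟨⟨subset_rfl, hτσ⟩, hτ⟩
  rw [faceAngleSum_eq_sum, hface, sum_singleton]

lemma faceAngleSum_dim_right (hind : AffineIndependent ℝ ((↑) : σ → Euc N)) (hτσ : τ ⊆ σ)
    (hσ : #σ = n + 1) : faceAngleSum τ σ n = 1 := by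
  have hface : {η ∈ Icc τ σ | #η = n + 1} = {σ} := by
    ext η
    simp only [mem_filter, mem_Icc, mem_singleton]
    refine ⟨fun ⟨⟨_, hησ⟩, hη⟩ => eq_of_subset_of_card_le hησ (hσ.trans hη.symm).le, ?_⟩
    rintro rfl
    exact ⟨⟨hτσ, subset_rfl⟩, hσ⟩
  rw [faceAngleSum_eq_sum, hface, sum_singleton,
    solidAngle_self hind (card_pos.1 (hσ ▸ n.succ_pos))]

lemma faceAngleSum_facets (hind : AffineIndependent ℝ ((↑) : σ → Euc N)) (hτσ : τ ⊆ σ)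
    (hσ : #σ = n + 2) : faceAngleSum τ σ n = #(σ \ τ) / 2 := by
  have hhalf : ∀ u ∈ σ \ τ, solidAngle (σ.erase u) σ = 1 / 2 := fun u hu => by
    have huσ := (mem_sdiff.1 hu).1
    have hcard : 0 < #(σ.erase u) := by
      rw [card_erase_of_mem huσ, hσ]
      exact n.succ_pos
    exact solidAngle_of_covBy hind (card_pos.1 hcard) (erase_covBy huσ)
  rw [faceAngleSum_eq_sum, filter_Icc_card_eq_image_erase hτσ hσ,
    sum_image fun u hu v hv => σ.erase_injOn (mem_sdiff.1 hu).1 (mem_sdiff.1 hv).1,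
    sum_congr rfl hhalf, sum_const, nsmul_eq_mul, mul_one_div]

theorem solidAngle_eq_sum_faceAngleSum (hind : AffineIndependent ℝ ((↑) : σ → Euc N))
    (hσ : #σ = n + 1) (hτσ : τ ⊆ σ) (hτ : #τ = p + 1) :
    solidAngle τ σ = ∑ i ∈ Icc p n, (-1) ^ (n + i) * faceAngleSum τ σ i := by
  have hdim : ∀ η ∈ Icc τ σ, #η - 1 ∈ Icc p n := fun η hη => by
    have hτη := card_le_card (mem_Icc.1 hη).1
    have hησ := card_le_card (mem_Icc.1 hη).2
    exact mem_Icc.2 ⟨by omega, by omega⟩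
  rw [solidAngle_eq_sum_Icc hind hτσ (card_pos.1 (hτ ▸ p.succ_pos)),
    ← sum_fiberwise_of_maps_to hdim]
  refine sum_congr rfl fun i _ => ?_
  rw [faceAngleSum_eq_sum, mul_sum]
  refine sum_congr ?_ fun η hη => ?_
  · refine filter_congr fun η hη => ?_
    have := card_le_card (mem_Icc.1 hη).1
    omega
  · obtain ⟨hη, hcard⟩ := mem_filter.1 hη
    have hησ := (mem_Icc.1 hη).2
    have hle := card_le_card hησ
    congr 1
    rw [card_sdiff_of_subset hησ, hσ, hcard]
    exact neg_one_pow_congr (by grind)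

end FaceAngleSum

theorem angle_sum_simplex_general {N n p : ℕ} (hodd : Odd (n + p)) (hp : p + 2 ≤ n)
    (σ τ : Finset (Euc N)) (hind : AffineIndependent ℝ ((↑) : σ → Euc N)) (hσcard : #σ = n + 1)
    (hτ : τ ⊆ σ) (hτcard : #τ = p + 1) :
    solidAngle τ σ - 1 / 2 * ∑ i ∈ Icc (p + 1) (n - 2), (-1) ^ (n + i) * faceAngleSum τ σ i =
      1 / 2 - ((n : ℝ) - p) / 4 := by
  obtain ⟨m, rfl⟩ : ∃ m, n = m + 2 := ⟨n - 2, by omega⟩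
  have hcodim : (#(σ \ τ) : ℝ) = (m + 2 : ℕ) - p := by
    rw [cast_card_sdiff hτ, hσcard, hτcard, Nat.cast_succ, Nat.cast_succ (n := p),
      add_sub_add_right_eq_sub]
  have hfacet : Odd (m + 2 + (m + 1)) := ⟨m + 1, by ring⟩
  have hself : Even (m + 2 + (m + 2)) := ⟨m + 2, rfl⟩
  have h := solidAngle_eq_sum_faceAngleSum hind hσcard hτ hτcard
  rw [sum_Icc_succ_top (by omega), sum_Icc_succ_top (by omega),
    ← add_sum_Ioc_eq_sum_Icc (by omega), ← Icc_add_one_left_eq_Ioc,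
    faceAngleSum_dim_left hτ hτcard, faceAngleSum_dim_right hind hτ hσcard,
    faceAngleSum_facets hind hτ hσcard, hcodim,
    hodd.neg_one_pow, hfacet.neg_one_pow, hself.neg_one_pow] at h
  rw [Nat.add_sub_cancel]
  linarith

/-- For an `n`-simplex `σ` in Euclidean space (`n` odd, `n ≥ 3`) and an (even)
`p`-face `τ` of `σ` with `0 ≤ p ≤ n-2`,
`α(τ, σ) - (1/2) Σ_{i=p+1}^{n-2} (-1)^{i+1} Σ_{σ ≻ η^i ≻ τ} α(η^i, σ)
  = 1/2 - (n-p)/4`. -/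
theorem angle_sum_simplex {N n p : ℕ} (hn : 3 ≤ n) (hodd : Odd n) (hpeven : Even p)
    (hp : p ≤ n - 2) (σ τ : Finset (Euc N))
    (hind : AffineIndependent ℝ ((↑) : σ → Euc N)) (hσcard : σ.card = n + 1)
    (hτ : τ ⊆ σ) (hτcard : τ.card = p + 1) :
    solidAngle τ σ - 1 / 2 *
        ∑ i ∈ Finset.Icc (p + 1) (n - 2), (-1 : ℝ) ^ (i + 1) *
          ∑ᶠ η ∈ {η : Finset (Euc N) | η ⊆ σ ∧ η.card = i + 1 ∧ τ ⊆ η},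
            solidAngle η σ =
      1 / 2 - ((n : ℝ) - (p : ℝ)) / 4 := by
  simpa [faceAngleSum, pow_add, hodd.neg_one_pow] using
    angle_sum_simplex_general (hodd.add_even hpeven) (by omega) σ τ hind hσcard hτ hτcard

end AngleDefectPaper
end
end
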